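/- arXiv:math/0405052 — 2 statements merged into one kernel-verified Lean document; each statement's English description precedes it below -/
import Mathlib

section
/- The Hilbert series of S[W'^*]^G satisfies (Σ_{d≥0} dim_{F_2}(S[W'^*]^G_d)·t^d) · (1−t^2)·(1−t^3)^2·(1−t^4)·(1−t^6)·(1−t^7) = 1 + t^4 + 2t^5 + t^6 + t^7 + t^8 + 2t^9 + 2t^10 + t^11 + t^12 + t^13 + 2t^14 + t^15 + t^19, as an identity of formal power series in ℤ[[t]]. -/
set_option synthInstance.maxHeartbeats 1000000
set_option maxHeartbeats 1000000

open MvPolynomial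

/-- The field with two elements. -/
abbrev F2 := ZMod 2

/-- `G = GL₃(𝔽₂)`. -/
abbrev G3 := GL (Fin 3) F2

/-- The generator `A` of `G`. -/
def Agen : G3 := ⟨!![1,0,1; 0,1,0; 0,0,1], !![1,0,1; 0,1,0; 0,0,1], by decide, by decide⟩

/-- The generator `B` of `G`. -/
def Bgen : G3 := ⟨!![0,0,1; 1,0,0; 0,1,0], !![0,1,0; 0,0,1; 1,0,0], by decide, by decide⟩

/-- The matrix `D(A)` of the action on `W'^* = 𝔽₂⁶`. -/
def DA6 : Matrix (Fin 6) (Fin 6) F2 :=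
  !![1,0,1,0,0,1; 0,1,0,0,0,0; 0,0,1,0,0,0; 0,0,0,1,1,0; 0,0,0,0,1,0; 0,0,0,0,0,1]

/-- The matrix `D(B)` of the action on `W'^* = 𝔽₂⁶`. -/
def DB6 : Matrix (Fin 6) (Fin 6) F2 :=
  !![0,0,1,0,0,0; 1,0,0,0,0,0; 0,1,0,0,0,0; 0,0,0,0,0,1; 0,0,0,1,0,0; 0,0,0,0,1,0]

/-- The algebra endomorphism of `S[W'^*] = 𝔽₂[a,b,c,d,e,f]` induced by the right action of
`σ` on the linear forms (coefficient row vectors are multiplied on the right by `D σ`; in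
particular the variable `Xᵢ` is sent to the linear form given by the `i`-th row of `D σ`). -/
noncomputable def polyAct (D : G3 →* GL (Fin 6) F2) (σ : G3) :
    MvPolynomial (Fin 6) F2 →ₐ[F2] MvPolynomial (Fin 6) F2 :=
  aeval (fun i => ∑ j, (D σ : Matrix (Fin 6) (Fin 6) F2) i j • X j)

/-- The invariant ring `S[W'^*]^H` for a subgroup `H ≤ G`. -/
noncomputable def invH (D : G3 →* GL (Fin 6) F2) (H : Subgroup G3) :
    Subalgebra F2 (MvPolynomial (Fin 6) F2) where
  carrier := {p | ∀ σ ∈ H, polyAct D σ p = p}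
  mul_mem' := fun ha hb σ hσ => by rw [map_mul, ha σ hσ, hb σ hσ]
  add_mem' := fun ha hb σ hσ => by rw [map_add, ha σ hσ, hb σ hσ]
  one_mem' := fun σ _ => map_one _
  zero_mem' := fun σ _ => map_zero _
  algebraMap_mem' := fun r σ _ => AlgHom.commutes _ r

/-- The invariant ring `S[W'^*]^G`. -/
noncomputable def invG (D : G3 →* GL (Fin 6) F2) :
    Subalgebra F2 (MvPolynomial (Fin 6) F2) :=
  invH D ⊤

/-!
The permutation module of `GL₃(𝔽₂)` on the seven points of the Fano plane, the nonzero vectors of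
`𝔽₂³`, splits as the trivial module spanned by the sum `ℓ` of the points plus a complement of
dimension six, since seven is odd; the Veronese map `v ↦ (v₀, v₁, v₂, v₀v₁, v₁v₂, v₂v₀)` identifies
the complement with `W'^*`. Hence the polynomial ring `T` on the seven points is `S[W'^*][ℓ]` with
`ℓ` invariant, and the Hilbert series of `S[W'^*]^G` is `1 - t` times that of `T^G`.

The orbit sums of monomials form a basis of `T^G`, so Burnside's lemma expresses its Hilbert series
as the average over `g ∈ G` of the products of `1 / (1 - t ^ |q|)` over the cycles `q` of `g`, and
the cycle type of a permutation of seven points is read off from the numbers of fixed points of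
`g`, `g²` and `g³`.
-/

section LinearSubstitutions

variable {R σ τ : Type*}

lemma isHomogeneous_map_of_isHomogeneous_map_X [CommSemiring R]
    {φ : MvPolynomial σ R →ₐ[R] MvPolynomial τ R}
    (hφ : ∀ i, (φ (X i)).IsHomogeneous 1) {d : ℕ} {p : MvPolynomial σ R}
    (hp : p.IsHomogeneous d) : (φ p).IsHomogeneous d := by
  rw [aeval_unique φ]
  simpa only [one_mul] using hp.aeval (φ ∘ X) hφ

lemma homogeneousComponent_add_mul [CommSemiring R] {ℓ : MvPolynomial σ R} {k : ℕ}
    (hℓ : ℓ.IsHomogeneous k) (d : ℕ) (p : MvPolynomial σ R) :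
    homogeneousComponent (k + d) (ℓ * p) = ℓ * homogeneousComponent d p := by
  let := gradedAlgebra (σ := σ) (R := R)
  simp only [← decomposition.decompose'_apply]
  exact DirectSum.coe_decompose_mul_add_of_left_mem (homogeneousSubmodule σ R) hℓ

lemma dvd_sub_map_of_dvd_X_sub_map_X [CommRing R] {ℓ : MvPolynomial σ R}
    {φ : MvPolynomial σ R →ₐ[R] MvPolynomial σ R} (h : ∀ i, ℓ ∣ X i - φ (X i))
    (p : MvPolynomial σ R) : ℓ ∣ p - φ p := by
  have hmod : Ideal.Quotient.mkₐ R (Ideal.span {ℓ}) =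
      (Ideal.Quotient.mkₐ R (Ideal.span {ℓ})).comp φ := algHom_ext fun i =>
    (Ideal.Quotient.mk_eq_mk_iff_sub_mem _ _).2 (Ideal.mem_span_singleton.2 (h i))
  exact Ideal.mem_span_singleton.1
    ((Ideal.Quotient.mk_eq_mk_iff_sub_mem _ _).1 (DFunLike.congr_fun hmod p))

end LinearSubstitutions

section InvariantForms

variable {K σ τ Γ : Type*} [Field K]

/-- The forms of degree `d` fixed by every member of the family `α` of algebra endomorphisms:
the homogeneous components of the ring of invariants of `α`. -/
def invariantForms (α : Γ → MvPolynomial σ K →ₐ[K] MvPolynomial σ K) (d : ℕ) :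
    Submodule K (MvPolynomial σ K) where
  carrier := {p | p.IsHomogeneous d ∧ ∀ γ, α γ p = p}
  add_mem' hp hq := ⟨hp.1.add hq.1, fun γ => by rw [map_add, hp.2, hq.2]⟩
  zero_mem' := ⟨isHomogeneous_zero σ K d, fun γ => map_zero (α γ)⟩
  smul_mem' c _ hp := ⟨(homogeneousSubmodule σ K d).smul_mem c hp.1,
    fun γ => by rw [map_smul, hp.2]⟩

/-- The Hilbert series of the ring of invariants of the family `α`. -/
noncomputable def hilbertSeries (α : Γ → MvPolynomial σ K →ₐ[K] MvPolynomial σ K) :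
    PowerSeries ℤ :=
  PowerSeries.mk fun d => (Module.finrank K (invariantForms α d) : ℤ)

instance finite_invariantForms [Finite σ] (α : Γ → MvPolynomial σ K →ₐ[K] MvPolynomial σ K)
    (d : ℕ) : Module.Finite K (invariantForms α d) :=
  have : Module.Finite K (homogeneousSubmodule σ K d) :=
    Module.Finite.iff_fg.2 (homogeneousSubmodule_fg σ K d)
  Submodule.finiteDimensional_of_le (S₂ := homogeneousSubmodule σ K d) fun _ hp => hp.1

/-- The action `α` splits off the invariant linear form `form` with complement `β`: the
polynomial ring acted on by `α` retracts, through the equivariant graded maps `proj` and `incl`,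
onto the one acted on by `β`, and the kernel of `proj` is generated by `form`. -/
structure SplitsOffForm (α : Γ → MvPolynomial σ K →ₐ[K] MvPolynomial σ K)
    (β : Γ → MvPolynomial τ K →ₐ[K] MvPolynomial τ K) (form : MvPolynomial σ K)
    (proj : MvPolynomial σ K →ₐ[K] MvPolynomial τ K)
    (incl : MvPolynomial τ K →ₐ[K] MvPolynomial σ K) : Prop where
  form_isHomogeneous : form.IsHomogeneous 1
  form_ne_zero : form ≠ 0
  map_form : ∀ γ, α γ form = form
  proj_X_isHomogeneous : ∀ i, (proj (X i)).IsHomogeneous 1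
  incl_X_isHomogeneous : ∀ i, (incl (X i)).IsHomogeneous 1
  proj_form : proj form = 0
  proj_incl : proj.comp incl = AlgHom.id K _
  form_dvd_X_sub : ∀ i, form ∣ X i - incl (proj (X i))
  proj_comp : ∀ γ, proj.comp (α γ) = (β γ).comp proj
  incl_comp : ∀ γ, incl.comp (β γ) = (α γ).comp incl

namespace SplitsOffForm

variable {α : Γ → MvPolynomial σ K →ₐ[K] MvPolynomial σ K}
  {β : Γ → MvPolynomial τ K →ₐ[K] MvPolynomial τ K} {form : MvPolynomial σ K}
  {proj : MvPolynomial σ K →ₐ[K] MvPolynomial τ K}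
  {incl : MvPolynomial τ K →ₐ[K] MvPolynomial σ K} {d : ℕ}

lemma proj_incl_apply (h : SplitsOffForm α β form proj incl) (p : MvPolynomial τ K) :
    proj (incl p) = p :=
  DFunLike.congr_fun h.proj_incl p

lemma proj_mem (h : SplitsOffForm α β form proj incl) {p : MvPolynomial σ K}
    (hp : p ∈ invariantForms α d) : proj p ∈ invariantForms β d := by
  refine ⟨isHomogeneous_map_of_isHomogeneous_map_X h.proj_X_isHomogeneous hp.1, fun γ => ?_⟩
  rw [← AlgHom.comp_apply, ← h.proj_comp, AlgHom.comp_apply, hp.2]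

lemma incl_mem (h : SplitsOffForm α β form proj incl) {p : MvPolynomial τ K}
    (hp : p ∈ invariantForms β d) : incl p ∈ invariantForms α d := by
  refine ⟨isHomogeneous_map_of_isHomogeneous_map_X h.incl_X_isHomogeneous hp.1, fun γ => ?_⟩
  rw [← AlgHom.comp_apply, ← h.incl_comp, AlgHom.comp_apply, hp.2]

lemma form_mul_mem (h : SplitsOffForm α β form proj incl) {p : MvPolynomial σ K}
    (hp : p ∈ invariantForms α d) : form * p ∈ invariantForms α (d + 1) := by
  refine ⟨?_, fun γ => by rw [map_mul, h.map_form, hp.2]⟩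
  rw [add_comm]
  exact h.form_isHomogeneous.mul hp.1

lemma exists_form_mul_eq (h : SplitsOffForm α β form proj incl) {p : MvPolynomial σ K}
    (hp : p ∈ invariantForms α (d + 1)) (hproj : proj p = 0) :
    ∃ q ∈ invariantForms α d, form * q = p := by
  obtain ⟨r, hr⟩ := dvd_sub_map_of_dvd_X_sub_map_X (φ := incl.comp proj) h.form_dvd_X_sub p
  rw [AlgHom.comp_apply, hproj, map_zero, sub_zero] at hr
  have hq : form * homogeneousComponent d r = p := by
    rw [← homogeneousComponent_add_mul h.form_isHomogeneous, ← hr, add_comm,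
      homogeneousComponent_eq_self hp.1]
  refine ⟨_, ⟨homogeneousComponent_isHomogeneous d r, fun γ => ?_⟩, hq⟩
  apply mul_left_cancel₀ h.form_ne_zero
  rw [hq, ← h.map_form γ, ← map_mul, hq, hp.2]

lemma finrank_invariantForms_zero (h : SplitsOffForm α β form proj incl) :
    Module.finrank K (invariantForms β 0) = Module.finrank K (invariantForms α 0) := by
  have incl_proj : ∀ p ∈ invariantForms α 0, incl (proj p) = p := fun p hp => by
    rw [totalDegree_eq_zero_iff_eq_C.1 ((totalDegree_zero_iff_isHomogeneous _).2 hp.1),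
      ← algebraMap_eq, AlgHom.commutes, AlgHom.commutes]
  exact LinearEquiv.finrank_eq <| LinearEquiv.ofLinearMap
    (incl.toLinearMap.restrict fun _ => h.incl_mem) (proj.toLinearMap.restrict fun _ => h.proj_mem)
    (LinearMap.ext fun p => Subtype.ext (incl_proj p p.2))
    (LinearMap.ext fun p => Subtype.ext (h.proj_incl_apply p))

lemma finrank_invariantForms_succ [Finite σ] (h : SplitsOffForm α β form proj incl) (d : ℕ) :
    Module.finrank K (invariantForms β (d + 1)) + Module.finrank K (invariantForms α d) =
      Module.finrank K (invariantForms α (d + 1)) := by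
  let mulForm : invariantForms α d →ₗ[K] invariantForms α (d + 1) :=
    (LinearMap.mulLeft K form).restrict fun _ => h.form_mul_mem
  let projForms : invariantForms α (d + 1) →ₗ[K] invariantForms β (d + 1) :=
    proj.toLinearMap.restrict fun _ => h.proj_mem
  have mulForm_injective : Function.Injective mulForm := fun p q hpq =>
    Subtype.ext (mul_left_cancel₀ h.form_ne_zero (congrArg Subtype.val hpq))
  have projForms_surjective : Function.Surjective projForms := fun p =>
    ⟨⟨incl p, h.incl_mem p.2⟩, Subtype.ext (h.proj_incl_apply p)⟩
  have ker_eq_range : LinearMap.ker projForms = LinearMap.range mulForm := by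
    refine le_antisymm (fun p hp => ?_) ?_
    · obtain ⟨q, hq, hqp⟩ := h.exists_form_mul_eq p.2 (congrArg Subtype.val hp)
      exact ⟨⟨q, hq⟩, Subtype.ext hqp⟩
    · rintro _ ⟨q, rfl⟩
      refine Subtype.ext ?_
      change proj (form * q) = 0
      rw [map_mul, h.proj_form, zero_mul]
  rw [← LinearMap.finrank_range_add_finrank_ker projForms, ker_eq_range,
    LinearMap.finrank_range_of_inj mulForm_injective, LinearMap.range_eq_top.2 projForms_surjective,
    finrank_top]

theorem hilbertSeries_eq_mul [Finite σ] (h : SplitsOffForm α β form proj incl) :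
    hilbertSeries β = hilbertSeries α * (1 - PowerSeries.X) := by
  ext (_ | d)
  · simp [hilbertSeries, h.finrank_invariantForms_zero]
  · rw [mul_sub, mul_one, map_sub, PowerSeries.coeff_succ_mul_X]
    simp only [hilbertSeries, PowerSeries.coeff_mk]
    rw [← h.finrank_invariantForms_succ d]
    push_cast
    ring

end SplitsOffForm

end InvariantForms

section GeometricSeries

/-- The power series `∑ t ^ (k * n) = 1 / (1 - t ^ k)`; for `k = 0` it is the junk value `1`. -/
noncomputable def geometricSeries (k : ℕ) : PowerSeries ℤ :=
  PowerSeries.mk fun d => if k ∣ d then 1 else 0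

lemma geometricSeries_mul_one_sub_X_pow {k : ℕ} (hk : k ≠ 0) :
    geometricSeries k * (1 - PowerSeries.X ^ k) = 1 := by
  have geometricSeries_eq : geometricSeries k = PowerSeries.expand k hk (PowerSeries.mk 1) := by
    ext d
    rw [PowerSeries.coeff_expand, geometricSeries, PowerSeries.coeff_mk, PowerSeries.coeff_mk,
      Pi.one_apply]
  rw [geometricSeries_eq, ← PowerSeries.expand_X k hk, ← map_one (PowerSeries.expand k hk),
    ← map_sub, ← map_mul, PowerSeries.mk_one_mul_one_sub_eq_one]

lemma coeff_prod_geometricSeries {κ : Type*} [Fintype κ] {w : κ → ℕ} (hw : ∀ q, 0 < w q) (d : ℕ) :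
    PowerSeries.coeff d (∏ q, geometricSeries (w q)) =
      Nat.card {l : κ → ℕ // ∑ q, w q * l q = d} := by
  classical
  have hterm : ∀ l : κ →₀ ℕ, ∏ q, PowerSeries.coeff (l q) (geometricSeries (w q)) =
      if ∀ q, w q ∣ l q then 1 else 0 := fun l => by
    simp only [geometricSeries, PowerSeries.coeff_mk, Finset.prod_ite_zero, Finset.prod_const_one,
      Finset.mem_univ, true_implies]
  rw [PowerSeries.coeff_prod, Finset.sum_congr rfl fun l _ => hterm l, Finset.sum_boole,
    Nat.cast_inj, ← Nat.subtype_card (p := fun l : κ →₀ ℕ => ∑ q, l q = d ∧ ∀ q, w q ∣ l q) _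
      (by simp)]
  exact Nat.card_congr
    { toFun := fun l => ⟨fun q => l.1 q / w q, by
        simpa only [Nat.mul_div_cancel' (l.2.2 _)] using l.2.1⟩
      invFun := fun l => ⟨Finsupp.equivFunOnFinite.symm fun q => w q * l.1 q,
        l.2, fun q => dvd_mul_right (w q) (l.1 q)⟩
      left_inv := fun l => Subtype.ext <| Finsupp.ext fun q => Nat.mul_div_cancel' (l.2.2 q)
      right_inv := fun l => Subtype.ext <| funext fun q => Nat.mul_div_cancel_left (l.1 q) (hw q) }

end GeometricSeries

section PermutationInvariants

attribute [local instance] Finsupp.comapSMul Finsupp.comapMulAction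

variable {H ι : Type*} [Group H] [MulAction H ι]

/-- The exponents of degree `d` of monomials in variables indexed by `ι`, with `h : H` acting by
`(h • n) i = n (h⁻¹ • i)`. -/
def exponentsOfDegree (H ι : Type*) [Group H] [MulAction H ι] (d : ℕ) :
    SubMulAction H (ι →₀ ℕ) where
  carrier := {n | n.degree = d}
  smul_mem' h n hn := by
    rw [Set.mem_ofPred_eq, ← hn, Finsupp.comapSMul_def, Finsupp.degree_apply, Finsupp.degree_apply]
    exact Finsupp.sum_mapDomain_index_addMonoidHom fun _ => AddMonoidHom.id ℕ

instance finite_exponentsOfDegree [Finite ι] (d : ℕ) : Finite (exponentsOfDegree H ι d) :=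
  (Finsupp.finite_of_degree_le d).subset fun _ hn => le_of_eq hn

/-- The algebra endomorphism permuting the variables indexed by `ι` by the action of `h : H`. -/
noncomputable abbrev permuteVars (K ι : Type*) [Field K] [MulAction H ι] (h : H) :
    MvPolynomial ι K →ₐ[K] MvPolynomial ι K :=
  rename (h • ·)

variable {K : Type*} [Field K] {d : ℕ}

lemma coeff_smul_eq_of_mem_invariantForms {p : MvPolynomial ι K}
    (hp : p ∈ invariantForms (permuteVars (H := H) K ι) d) (h : H) (n : ι →₀ ℕ) :
    coeff (h • n) p = coeff n p := by
  conv_lhs => rw [← hp.2 h]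
  exact coeff_rename_mapDomain _ (MulAction.injective h) p n

lemma sum_monomial_mem_invariantForms [Fintype (exponentsOfDegree H ι d)]
    {c : exponentsOfDegree H ι d → K} (hc : ∀ (h : H) n, c (h • n) = c n) :
    ∑ n : exponentsOfDegree H ι d, monomial (n : ι →₀ ℕ) (c n) ∈
      invariantForms (permuteVars (H := H) K ι) d := by
  refine ⟨IsHomogeneous.sum _ _ _ fun n _ => isHomogeneous_monomial _ n.2, fun h => ?_⟩
  rw [map_sum]
  refine Fintype.sum_equiv (MulAction.toPerm h) _ _ fun n => ?_
  rw [rename_monomial, MulAction.toPerm_apply, hc]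
  rfl

lemma coeff_sum_monomial_exponentsOfDegree [Fintype (exponentsOfDegree H ι d)]
    (c : exponentsOfDegree H ι d → K) (n : exponentsOfDegree H ι d) :
    coeff (n : ι →₀ ℕ) (∑ m : exponentsOfDegree H ι d, monomial (m : ι →₀ ℕ) (c m)) = c n := by
  classical
  simp only [coeff_sum, coeff_monomial, SetLike.coe_eq_coe, Finset.sum_ite_eq', Finset.mem_univ,
    if_true]

lemma finrank_invariantForms_permuteVars [Finite ι] :
    Module.finrank K (invariantForms (permuteVars (H := H) K ι) d) =
      Nat.card (MulAction.orbitRel.Quotient H (exponentsOfDegree H ι d)) := by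
  let orbitCoeff : invariantForms (permuteVars (H := H) K ι) d →ₗ[K]
      MulAction.orbitRel.Quotient H (exponentsOfDegree H ι d) → K :=
    { toFun := fun p q => Quotient.liftOn' q (fun n => coeff (n : ι →₀ ℕ) p.1) <| by
        rintro _ n ⟨h, rfl⟩
        exact coeff_smul_eq_of_mem_invariantForms p.2 h n
      map_add' := fun _ _ => funext fun q => Quotient.inductionOn' q fun _ => rfl
      map_smul' := fun _ _ => funext fun q => Quotient.inductionOn' q fun _ => rfl }
  have orbitCoeff_injective : Function.Injective orbitCoeff := by
    refine fun p p' hpp' => Subtype.ext (MvPolynomial.ext _ _ fun n => ?_)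
    by_cases hn : n.degree = d
    · exact congrFun hpp' (Quotient.mk'' ⟨n, hn⟩)
    · rw [p.2.1.coeff_eq_zero hn, p'.2.1.coeff_eq_zero hn]
  have orbitCoeff_surjective : Function.Surjective orbitCoeff := by
    have := Fintype.ofFinite (exponentsOfDegree H ι d)
    refine fun f => ⟨⟨_, sum_monomial_mem_invariantForms (c := fun n => f (Quotient.mk'' n))
      fun h n => congrArg f (Quotient.sound' ⟨h, rfl⟩)⟩, funext fun q => ?_⟩
    induction q using Quotient.inductionOn' with
    | h n => exact coeff_sum_monomial_exponentsOfDegree _ n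
  have := Fintype.ofFinite (MulAction.orbitRel.Quotient H (exponentsOfDegree H ι d))
  rw [(LinearEquiv.ofBijective orbitCoeff ⟨orbitCoeff_injective, orbitCoeff_surjective⟩).finrank_eq,
    Module.finrank_fintype_fun_eq_card, Nat.card_eq_fintype_card]

lemma natCard_orbit_pos [Finite ι] (q : MulAction.orbitRel.Quotient H ι) : 0 < Nat.card q.orbit :=
  Nat.card_pos_iff.2 ⟨q.nonempty_orbit.to_subtype, inferInstance⟩

lemma sum_orbitRel_mk_eq [Fintype ι] [Fintype (MulAction.orbitRel.Quotient H ι)]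
    (f : MulAction.orbitRel.Quotient H ι → ℕ) :
    ∑ i : ι, f (Quotient.mk'' i) = ∑ q, Nat.card q.orbit * f q := by
  classical
  rw [← Finset.sum_fiberwise (Finset.univ : Finset ι)
    (fun i => (Quotient.mk'' i : MulAction.orbitRel.Quotient H ι))]
  refine Finset.sum_congr rfl fun q _ => ?_
  rw [Nat.subtype_card (Finset.univ.filter fun i => Quotient.mk'' i = q) fun i => by
    rw [MulAction.orbitRel.Quotient.mem_orbit, Finset.mem_filter_univ], ← smul_eq_mul]
  exact Finset.sum_eq_card_nsmul fun i hi => congrArg f (Finset.mem_filter.1 hi).2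

/-- The cycles of `h`: the orbits on `ι` of the cyclic group it generates. -/
abbrev CycleOf (ι : Type*) [MulAction H ι] (h : H) : Type _ :=
  MulAction.orbitRel.Quotient (Subgroup.zpowers h) ι

/-- The series `∏ 1 / (1 - t ^ |q|)` over the cycles `q` of `h`. -/
noncomputable def cycleSeries (ι : Type*) [MulAction H ι] (h : H) : PowerSeries ℤ :=
  ∏ᶠ q : CycleOf ι h, geometricSeries (Nat.card q.orbit)

lemma exponent_apply_eq_of_mem_orbit_zpowers {n : ι →₀ ℕ} {h : H} (hn : h • n = n) {i j : ι}
    (hij : i ∈ MulAction.orbit (Subgroup.zpowers h) j) : n i = n j := by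
  obtain ⟨⟨g, hg⟩, rfl⟩ := hij
  have hg_stabilizer : g ∈ MulAction.stabilizer H n := Subgroup.zpowers_le.2 hn hg
  have hgn : g⁻¹ • n = n := inv_mem hg_stabilizer
  simpa only [Finsupp.comapSMul_apply, inv_inv] using! DFunLike.congr_fun hgn j

lemma coeff_cycleSeries [Finite ι] (h : H) (d : ℕ) :
    PowerSeries.coeff d (cycleSeries ι h) =
      Nat.card (MulAction.fixedBy (exponentsOfDegree H ι d) h) := by
  have := Fintype.ofFinite ι
  have := Fintype.ofFinite (CycleOf ι h)
  rw [cycleSeries, finprod_eq_prod_of_fintype, coeff_prod_geometricSeries natCard_orbit_pos,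
    Nat.cast_inj]
  have smul_pullback (l : CycleOf ι h → ℕ) :
      h • Finsupp.equivFunOnFinite.symm (fun i : ι => l (Quotient.mk'' i)) =
        Finsupp.equivFunOnFinite.symm fun i => l (Quotient.mk'' i) := Finsupp.ext fun i => by
    rw [Finsupp.comapSMul_apply]
    exact congrArg l (Quotient.sound' ⟨⟨h⁻¹, inv_mem (Subgroup.mem_zpowers h)⟩, rfl⟩)
  exact Nat.card_congr
    { toFun := fun l => ⟨⟨Finsupp.equivFunOnFinite.symm fun i => l.1 (Quotient.mk'' i),
        (Finsupp.degree_eq_sum _).trans ((sum_orbitRel_mk_eq l.1).trans l.2)⟩,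
        Subtype.ext (smul_pullback l.1)⟩
      invFun := fun n => ⟨fun q => Quotient.liftOn' q n.1.1 fun _ _ hij =>
          exponent_apply_eq_of_mem_orbit_zpowers (congrArg Subtype.val n.2) hij,
        (sum_orbitRel_mk_eq _).symm.trans ((Finsupp.degree_eq_sum n.1.1).symm.trans n.1.2)⟩
      left_inv := fun l => Subtype.ext <| funext fun q => Quotient.inductionOn' q fun _ => rfl
      right_inv := fun n => Subtype.ext <| Subtype.ext <| Finsupp.ext fun _ => rfl }

/-- Burnside's lemma for the monomials of each degree gives Molien's formula in all
characteristics. -/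
theorem card_mul_hilbertSeries_permuteVars [Fintype H] [Finite ι] :
    Fintype.card H * hilbertSeries (permuteVars (H := H) K ι) = ∑ h : H, cycleSeries ι h := by
  classical
  ext d
  have := Fintype.ofFinite (exponentsOfDegree H ι d)
  have := Fintype.ofFinite (MulAction.orbitRel.Quotient H (exponentsOfDegree H ι d))
  have burnside := MulAction.sum_card_fixedBy_eq_card_orbits_mul_card_group H
    (exponentsOfDegree H ι d)
  simp only [← Nat.card_eq_fintype_card] at burnside ⊢
  rw [map_sum]
  simp only [coeff_cycleSeries, ← Nat.cast_sum, burnside]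
  rw [mul_comm, Nat.cast_mul, ← finrank_invariantForms_permuteVars (K := K),
    ← map_natCast PowerSeries.C, PowerSeries.coeff_mul_C, hilbertSeries, PowerSeries.coeff_mk]

@[to_additive]
lemma prod_comp_eq_prod_pow_natCard {κ κ' M : Type*} [Fintype κ] [CommMonoid M] {g : κ → κ'}
    {s : Finset κ'} (hg : ∀ q, g q ∈ s) (f : κ' → M) :
    ∏ q, f (g q) = ∏ j ∈ s, f j ^ Nat.card {q // g q = j} := by
  classical
  rw [← Finset.prod_fiberwise_of_maps_to fun q _ => hg q]
  refine Finset.prod_congr rfl fun j _ => ?_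
  rw [Nat.subtype_card (Finset.univ.filter fun q => g q = j) fun q => Finset.mem_filter_univ q]
  exact Finset.prod_eq_pow_card fun q hq => congrArg f (Finset.mem_filter.1 hq).2

/-- The number of cycles of length `j` of `h`. -/
noncomputable def cycleCount (ι : Type*) [MulAction H ι] (h : H) (j : ℕ) : ℕ :=
  Nat.card {q : CycleOf ι h // Nat.card q.orbit = j}

lemma natCard_orbit_mem_Icc [Fintype ι] (q : MulAction.orbitRel.Quotient H ι) :
    Nat.card q.orbit ∈ Finset.Icc 1 (Fintype.card ι) := by
  rw [Finset.mem_Icc, ← Nat.card_eq_fintype_card]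
  exact ⟨natCard_orbit_pos q, Finite.card_subtype_le _⟩

lemma cycleSeries_eq_prod_pow_cycleCount [Fintype ι] (h : H) :
    cycleSeries ι h =
      ∏ j ∈ Finset.Icc 1 (Fintype.card ι), geometricSeries j ^ cycleCount ι h j := by
  have := Fintype.ofFinite (CycleOf ι h)
  rw [cycleSeries, finprod_eq_prod_of_fintype, prod_comp_eq_prod_pow_natCard natCard_orbit_mem_Icc]
  rfl

lemma pow_smul_eq_iff_card_orbit_dvd [Finite ι] (h : H) (m : ℕ) (i : ι) :
    h ^ m • i = i ↔ Nat.card (MulAction.orbit (Subgroup.zpowers h) i) ∣ m := by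
  have := Fintype.ofFinite (MulAction.orbit (Subgroup.zpowers h) i)
  rw [MulAction.pow_smul_eq_iff_minimalPeriod_dvd, MulAction.minimalPeriod_eq_card,
    Nat.card_eq_fintype_card]

lemma ncard_fixedBy_pow_eq_sum_cycleCount [Fintype ι] (h : H) (m : ℕ) :
    (MulAction.fixedBy ι (h ^ m)).ncard =
      ∑ j ∈ Finset.Icc 1 (Fintype.card ι), if j ∣ m then j * cycleCount ι h j else 0 := by
  classical
  have := Fintype.ofFinite (CycleOf ι h)
  calc (MulAction.fixedBy ι (h ^ m)).ncard
      = ∑ i : ι, if Nat.card (MulAction.orbit (Subgroup.zpowers h) i) ∣ m then 1 else 0 := by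
        rw [Finset.sum_boole, Nat.cast_id, ← Nat.card_coe_set_eq]
        refine Nat.subtype_card _ fun i => ?_
        rw [Finset.mem_filter_univ, MulAction.mem_fixedBy, pow_smul_eq_iff_card_orbit_dvd]
    _ = ∑ q : CycleOf ι h, Nat.card q.orbit * if Nat.card q.orbit ∣ m then 1 else 0 :=
        sum_orbitRel_mk_eq fun q : CycleOf ι h => if Nat.card q.orbit ∣ m then 1 else 0
    _ = ∑ j ∈ Finset.Icc 1 (Fintype.card ι), cycleCount ι h j • (j * if j ∣ m then 1 else 0) :=
        sum_comp_eq_sum_nsmul_natCard natCard_orbit_mem_Icc fun j => j * if j ∣ m then 1 else 0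
    _ = ∑ j ∈ Finset.Icc 1 (Fintype.card ι), if j ∣ m then j * cycleCount ι h j else 0 := by
        refine Finset.sum_congr rfl fun j _ => ?_
        split_ifs <;> simp [mul_comm]

end PermutationInvariants

section SevenPoints

lemma geometricSeries_zero : geometricSeries 0 = 1 := by
  ext d
  simp [geometricSeries, PowerSeries.coeff_one]

/-- The series `∏ 1 / (1 - t ^ |q|)` over the cycles `q` of a permutation of seven points, in terms
of the numbers `(f₁, f₂, f₃)` of fixed points of its first three powers: there are `f₁`,
`(f₂ - f₁) / 2` and `(f₃ - f₁) / 3` cycles of length one, two and three, and as `4 + 4 > 7` the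
remaining points, if any, form a single cycle. -/
noncomputable def sevenPointSeries (f : ℕ × ℕ × ℕ) : PowerSeries ℤ :=
  geometricSeries 1 ^ f.1 * geometricSeries 2 ^ ((f.2.1 - f.1) / 2) *
    geometricSeries 3 ^ ((f.2.2 - f.1) / 3) * geometricSeries (7 + f.1 - f.2.1 - f.2.2)

lemma prod_long_cycles_eq_geometricSeries {c₄ c₅ c₆ c₇ : ℕ}
    (hc : 4 * c₄ + 5 * c₅ + 6 * c₆ + 7 * c₇ ≤ 7) :
    geometricSeries 4 ^ c₄ * geometricSeries 5 ^ c₅ * geometricSeries 6 ^ c₆ *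
      geometricSeries 7 ^ c₇ = geometricSeries (4 * c₄ + 5 * c₅ + 6 * c₆ + 7 * c₇) := by
  have h₄ : c₄ ≤ 1 := by omega
  have h₅ : c₅ ≤ 1 := by omega
  have h₆ : c₆ ≤ 1 := by omega
  have h₇ : c₇ ≤ 1 := by omega
  interval_cases c₄ <;> interval_cases c₅ <;> interval_cases c₆ <;> interval_cases c₇ <;>
    first | omega | simp [geometricSeries_zero]

lemma cycleSeries_eq_sevenPointSeries {H ι : Type*} [Group H] [MulAction H ι] [Fintype ι]
    (hι : Fintype.card ι = 7) (h : H) :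
    cycleSeries ι h = sevenPointSeries ((MulAction.fixedBy ι h).ncard,
      (MulAction.fixedBy ι (h ^ 2)).ncard, (MulAction.fixedBy ι (h ^ 3)).ncard) := by
  have ncard_fixedBy (m : ℕ) := ncard_fixedBy_pow_eq_sum_cycleCount (ι := ι) h m
  have points : cycleCount ι h 1 + 2 * cycleCount ι h 2 + 3 * cycleCount ι h 3 +
      4 * cycleCount ι h 4 + 5 * cycleCount ι h 5 + 6 * cycleCount ι h 6 +
      7 * cycleCount ι h 7 = 7 := by
    simpa [Finset.sum_Icc_succ_top, hι] using (ncard_fixedBy 0).symm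
  have fixed_one : (MulAction.fixedBy ι h).ncard = cycleCount ι h 1 := by
    simpa [Finset.sum_Icc_succ_top, hι] using ncard_fixedBy 1
  have fixed_sq : (MulAction.fixedBy ι (h ^ 2)).ncard =
      cycleCount ι h 1 + 2 * cycleCount ι h 2 := by
    simpa [Finset.sum_Icc_succ_top, hι] using ncard_fixedBy 2
  have fixed_cube : (MulAction.fixedBy ι (h ^ 3)).ncard =
      cycleCount ι h 1 + 3 * cycleCount ι h 3 := by
    simpa [Finset.sum_Icc_succ_top, hι] using ncard_fixedBy 3
  have two_cycles : cycleCount ι h 2 =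
      ((MulAction.fixedBy ι (h ^ 2)).ncard - (MulAction.fixedBy ι h).ncard) / 2 := by omega
  have three_cycles : cycleCount ι h 3 =
      ((MulAction.fixedBy ι (h ^ 3)).ncard - (MulAction.fixedBy ι h).ncard) / 3 := by omega
  have long_cycles : 4 * cycleCount ι h 4 + 5 * cycleCount ι h 5 + 6 * cycleCount ι h 6 +
      7 * cycleCount ι h 7 = 7 + (MulAction.fixedBy ι h).ncard -
        (MulAction.fixedBy ι (h ^ 2)).ncard - (MulAction.fixedBy ι (h ^ 3)).ncard := by omega
  rw [sevenPointSeries, ← long_cycles, ← two_cycles, ← three_cycles, fixed_one,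
    ← prod_long_cycles_eq_geometricSeries (by omega), cycleSeries_eq_prod_pow_cycleCount, hι]
  simp [Finset.prod_Icc_succ_top, mul_assoc]

end SevenPoints

section Generation

lemma eq_top_of_transvection_mem {n : Type*} [Fintype n] [DecidableEq n] {K : Subgroup (GL n F2)}
    (hK : ∀ i j, i ≠ j → ∃ g ∈ K, g.val = Matrix.transvection i j 1) : K = ⊤ := by
  suffices h : ∀ M : Matrix n n F2, M.det ≠ 0 → ∃ g ∈ K, g.val = M by
    refine eq_top_iff.2 fun g _ => ?_
    obtain ⟨k, hk, hkg⟩ := h g.val (g.isUnit.map Matrix.detMonoidHom).ne_zero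
    rwa [← Units.ext hkg]
  intro M hM
  refine Matrix.diagonal_transvection_induction_of_det_ne_zero
    (fun M => ∃ g ∈ K, g.val = M) M hM ?diag ?transvec ?mul
  case diag =>
    intro w hw
    have w_eq_one : w = 1 := funext fun i =>
      Fin.eq_one_of_ne_zero (w i)
        (Finset.prod_ne_zero_iff.1 (Matrix.det_diagonal (d := w) ▸ hw) i (Finset.mem_univ i))
    exact ⟨1, K.one_mem, by rw [w_eq_one, Units.val_one]; exact Matrix.diagonal_one.symm⟩
  case transvec =>
    rintro ⟨i, j, hij, c⟩
    obtain rfl | hc := eq_or_ne c 0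
    · exact ⟨1, K.one_mem, (Matrix.transvection_zero i j).symm⟩
    · rw [Fin.eq_one_of_ne_zero c hc]
      exact hK i j hij
  case mul =>
    rintro _ _ - - ⟨k, hk, rfl⟩ ⟨l, hl, rfl⟩
    exact ⟨k * l, K.mul_mem hk hl, rfl⟩

lemma closure_Agen_Bgen : Subgroup.closure {Agen, Bgen} = ⊤ := by
  set K := Subgroup.closure {Agen, Bgen}
  have hA : Agen ∈ K := Subgroup.subset_closure (Set.mem_insert _ _)
  have hB : Bgen ∈ K := Subgroup.subset_closure (Set.mem_insert_of_mem _ rfl)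
  have commutator_mem {x y : G3} (hx : x ∈ K) (hy : y ∈ K) : x * y * x⁻¹ * y⁻¹ ∈ K :=
    mul_mem (mul_mem (mul_mem hx hy) (inv_mem hx)) (inv_mem hy)
  have h₂₁ : Bgen * Agen * Bgen⁻¹ ∈ K := mul_mem (mul_mem hB hA) (inv_mem hB)
  have h₃₂ : Bgen⁻¹ * Agen * Bgen ∈ K := mul_mem (mul_mem (inv_mem hB) hA) hB
  refine eq_top_of_transvection_mem fun i j hij => ?_
  fin_cases i <;> fin_cases j <;> first
    | exact absurd rfl hij
    | exact ⟨_, hA, by decide⟩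
    | exact ⟨_, h₂₁, by decide⟩
    | exact ⟨_, h₃₂, by decide⟩
    | exact ⟨_, commutator_mem hA h₃₂, by decide⟩
    | exact ⟨_, commutator_mem h₂₁ hA, by decide⟩
    | exact ⟨_, commutator_mem h₃₂ h₂₁, by decide⟩

end Generation

section FanoPlane

open Matrix

/-- The seven points of the Fano plane, as the nonzero vectors of `𝔽₂³`. -/
abbrev FanoPoint := {v : Fin 3 → F2 // v ≠ 0}

/-- `GL₃(𝔽₂)` acts on the right on row vectors, hence its opposite acts on the left. -/
instance : MulAction G3ᵐᵒᵖ FanoPoint where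
  smul h v := ⟨v.1 ᵥ* h.unop.val, fun hv => v.2 <| by
    rw [← vecMul_one v.1, ← h.unop.mul_inv, ← vecMul_vecMul, hv, zero_vecMul]⟩
  one_smul v := Subtype.ext (vecMul_one v.1)
  mul_smul h k v := Subtype.ext (vecMul_vecMul v.1 k.unop.val h.unop.val).symm

lemma card_fanoPoint : Fintype.card FanoPoint = 7 := rfl

/-- The number of points of the Fano plane fixed by the matrix `M`. -/
def fixedCount (M : Matrix (Fin 3) (Fin 3) F2) : ℕ :=
  Fintype.card {v : FanoPoint // v.1 ᵥ* M = v.1}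

lemma ncard_fixedBy_op (g : G3) :
    (MulAction.fixedBy FanoPoint (MulOpposite.op g)).ncard = fixedCount g.val := by
  rw [fixedCount, ← Nat.card_eq_fintype_card, ← Nat.card_coe_set_eq]
  exact Nat.card_congr (Equiv.subtypeEquivRight fun v => Subtype.ext_iff)

/-- The numbers of points of the Fano plane fixed by `M`, `M ^ 2` and `M ^ 3`. -/
def fixedCounts (M : Matrix (Fin 3) (Fin 3) F2) : ℕ × ℕ × ℕ :=
  (fixedCount M, fixedCount (M * M), fixedCount (M * M * M))

lemma cycleSeries_op (g : G3) :
    cycleSeries FanoPoint (MulOpposite.op g) = sevenPointSeries (fixedCounts g.val) := by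
  rw [cycleSeries_eq_sevenPointSeries card_fanoPoint, ← MulOpposite.op_pow, ← MulOpposite.op_pow,
    ncard_fixedBy_op, ncard_fixedBy_op, ncard_fixedBy_op, pow_three', sq]
  rfl

/-- The five triples belong to the elements of order one, two, three, four and seven. -/
lemma map_fixedCounts_det_ne_zero :
    (Finset.univ.filter fun M : Matrix (Fin 3) (Fin 3) F2 => M.det ≠ 0).val.map fixedCounts =
      .replicate 1 (7, 7, 7) + .replicate 21 (3, 7, 3) + .replicate 56 (1, 1, 7) +
        .replicate 42 (1, 3, 1) + .replicate 48 (0, 0, 0) := by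
  decide +kernel

lemma sum_GL_eq_sum_det_ne_zero {n K M : Type*} [Fintype n] [DecidableEq n] [Field K] [Fintype K]
    [DecidableEq K] [Fintype (GL n K)] [AddCommMonoid M] (f : Matrix n n K → M) :
    ∑ g : GL n K, f g.val = ∑ N : Matrix n n K with N.det ≠ 0, f N := by
  refine Finset.sum_nbij Units.val (fun g _ => ?_) (fun _ _ _ _ h => Units.ext h)
    (fun N hN => ?_) fun _ _ => rfl
  · exact Finset.mem_filter.2 ⟨Finset.mem_univ _, (g.isUnit.map detMonoidHom).ne_zero⟩
  · exact ⟨GeneralLinearGroup.mkOfDetNeZero N (Finset.mem_filter.1 hN).2,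
      Finset.mem_coe.2 (Finset.mem_univ _), rfl⟩

lemma sum_fixedCounts {M : Type*} [AddCommMonoid M] (f : ℕ × ℕ × ℕ → M) :
    ∑ g : G3, f (fixedCounts g.val) =
      f (7, 7, 7) + 21 • f (3, 7, 3) + 56 • f (1, 1, 7) + 42 • f (1, 3, 1) + 48 • f (0, 0, 0) := by
  rw [sum_GL_eq_sum_det_ne_zero fun N => f (fixedCounts N), Finset.sum, ← Function.comp_def,
    ← Multiset.map_map, map_fixedCounts_det_ne_zero]
  simp only [Multiset.map_add, Multiset.map_replicate, Multiset.sum_add, Multiset.sum_replicate,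
    one_smul]

instance : Fintype G3ᵐᵒᵖ := Fintype.ofEquiv G3 MulOpposite.opEquiv

lemma card_G3_op : Fintype.card G3ᵐᵒᵖ = 168 := by
  rw [Fintype.ofEquiv_card, Fintype.card_eq_sum_ones]
  exact sum_fixedCounts fun _ => 1

theorem mul_hilbertSeries_permuteVars_fanoPoint :
    168 * hilbertSeries (permuteVars (H := G3ᵐᵒᵖ) F2 FanoPoint) =
      geometricSeries 1 ^ 7 + 21 * (geometricSeries 1 ^ 3 * geometricSeries 2 ^ 2) +
        56 * (geometricSeries 1 * geometricSeries 3 ^ 2) +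
        42 * (geometricSeries 1 * geometricSeries 2 * geometricSeries 4) +
        48 * geometricSeries 7 := by
  have burnside := card_mul_hilbertSeries_permuteVars (H := G3ᵐᵒᵖ) (ι := FanoPoint) (K := F2)
  rw [card_G3_op, ← MulOpposite.opEquiv.sum_comp] at burnside
  simp only [MulOpposite.opEquiv_apply, cycleSeries_op, sum_fixedCounts] at burnside
  simpa [sevenPointSeries, geometricSeries_zero] using burnside

end FanoPlane

section VeroneseSplitting

open Matrix

/-- The degree-two Veronese map of `𝔽₂³`, squarefree as `x ^ 2 = x` on `𝔽₂`. -/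
def veronese (v : Fin 3 → F2) : Fin 6 → F2 :=
  ![v 0, v 1, v 2, v 0 * v 1, v 1 * v 2, v 2 * v 0]

/-- The Veronese vectors of the points of the Fano plane, as the rows of a matrix. -/
def veroneseMatrix : Matrix FanoPoint (Fin 6) F2 :=
  of fun v => veronese v.1

/-- The left inverse of `veroneseMatrix` whose rows have coordinate sum zero. -/
def veroneseSection : Matrix (Fin 6) FanoPoint F2 :=
  of fun i v => ![v.1 1 + v.1 2 + v.1 1 * v.1 2, v.1 2 + v.1 0 + v.1 2 * v.1 0,
    v.1 0 + v.1 1 + v.1 0 * v.1 1, v.1 2, v.1 0, v.1 1] i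

lemma veroneseSection_mul_veroneseMatrix : veroneseSection * veroneseMatrix = 1 := by
  decide +kernel

lemma veroneseMatrix_mul_veroneseSection :
    veroneseMatrix * veroneseSection = 1 + of fun _ _ => 1 := by
  decide +kernel

lemma veronese_vecMul_Agen (v : Fin 3 → F2) : veronese (v ᵥ* Agen.val) = veronese v ᵥ* DA6 := by
  decide +revert

lemma veronese_vecMul_Bgen (v : Fin 3 → F2) : veronese (v ᵥ* Bgen.val) = veronese v ᵥ* DB6 := by
  decide +revert

variable {D : G3 →* GL (Fin 6) F2}

lemma veronese_vecMul (hA : (D Agen : Matrix (Fin 6) (Fin 6) F2) = DA6)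
    (hB : (D Bgen : Matrix (Fin 6) (Fin 6) F2) = DB6) (g : G3) (v : Fin 3 → F2) :
    veronese (v ᵥ* g.val) = veronese v ᵥ* (D g).val := by
  have hg : g ∈ Subgroup.closure {Agen, Bgen} := closure_Agen_Bgen ▸ Subgroup.mem_top g
  induction hg using Subgroup.closure_induction generalizing v with
  | mem g hg =>
    obtain rfl | rfl := hg
    · rw [hA, veronese_vecMul_Agen]
    · rw [hB, veronese_vecMul_Bgen]
  | one => rw [map_one, Units.val_one, Units.val_one, vecMul_one, vecMul_one]
  | mul g k _ _ hg hk =>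
    rw [map_mul, Units.val_mul, Units.val_mul, ← vecMul_vecMul, hk, hg, vecMul_vecMul]
  | inv g _ hg =>
    have hv := hg (v ᵥ* g⁻¹.val)
    rw [vecMul_vecMul, g.inv_mul, vecMul_one] at hv
    rw [hv, vecMul_vecMul, map_inv, (D g).mul_inv, vecMul_one]

lemma polyAct_eq_bind₁ (g : G3) : polyAct D g = bind₁ (D g).val.toMvPolynomial := by
  refine algHom_ext fun i => ?_
  rw [polyAct, aeval_X, bind₁_X_right, toMvPolynomial]
  simp only [X, smul_monomial, smul_eq_mul, mul_one]

/-- The projection onto `S[W'^*]` of the polynomial ring on the points of the Fano plane. -/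
noncomputable def fanoProj : MvPolynomial FanoPoint F2 →ₐ[F2] MvPolynomial (Fin 6) F2 :=
  bind₁ veroneseMatrix.toMvPolynomial

/-- The inclusion of `S[W'^*]` into the polynomial ring on the points of the Fano plane. -/
noncomputable def fanoIncl : MvPolynomial (Fin 6) F2 →ₐ[F2] MvPolynomial FanoPoint F2 :=
  bind₁ veroneseSection.toMvPolynomial

/-- The sum of the variables, spanning the trivial summand of the permutation module. -/
noncomputable def fanoForm : MvPolynomial FanoPoint F2 := ∑ v, X v

lemma permuteVars_fanoForm (h : G3ᵐᵒᵖ) : permuteVars F2 FanoPoint h fanoForm = fanoForm := by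
  simp only [fanoForm, map_sum, rename_X]
  exact Equiv.sum_comp (MulAction.toPerm h) X

lemma fanoForm_ne_zero : fanoForm ≠ 0 := fun h => by
  have coeff_eq := congrArg (coeff (Finsupp.single (⟨1, one_ne_zero⟩ : FanoPoint) 1)) h
  simp [fanoForm, coeff_sum, coeff_X, Finsupp.single_left_inj] at coeff_eq

lemma fanoProj_fanoIncl : fanoProj.comp fanoIncl = AlgHom.id F2 _ := by
  refine algHom_ext fun i => ?_
  rw [AlgHom.comp_apply, fanoIncl, fanoProj, bind₁_X_right, ← toMvPolynomial_mul,
    veroneseSection_mul_veroneseMatrix, toMvPolynomial_one, AlgHom.id_apply]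

lemma fanoIncl_fanoProj_X (v : FanoPoint) : fanoIncl (fanoProj (X v)) = X v + fanoForm := by
  rw [fanoIncl, fanoProj, bind₁_X_right, ← toMvPolynomial_mul, veroneseMatrix_mul_veroneseSection,
    toMvPolynomial_add, toMvPolynomial_one]
  rfl

lemma fanoProj_fanoForm : fanoProj fanoForm = 0 := by
  let v : FanoPoint := ⟨1, one_ne_zero⟩
  have h := DFunLike.congr_fun fanoProj_fanoIncl (fanoProj (X v))
  rw [AlgHom.comp_apply, fanoIncl_fanoProj_X, map_add] at h
  exact add_eq_left.1 h

lemma fanoProj_comp_permuteVars (hA : (D Agen : Matrix (Fin 6) (Fin 6) F2) = DA6)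
    (hB : (D Bgen : Matrix (Fin 6) (Fin 6) F2) = DB6) (h : G3ᵐᵒᵖ) :
    fanoProj.comp (permuteVars F2 FanoPoint h) = (polyAct D h.unop).comp fanoProj := by
  refine algHom_ext fun v => ?_
  have row_smul : veroneseMatrix (h • v) = (veroneseMatrix * (D h.unop).val) v :=
    veronese_vecMul hA hB h.unop v.1
  rw [AlgHom.comp_apply, AlgHom.comp_apply, rename_X, polyAct_eq_bind₁, fanoProj, bind₁_X_right,
    bind₁_X_right, ← toMvPolynomial_mul, toMvPolynomial, toMvPolynomial, row_smul]

lemma fanoIncl_comp_polyAct (hA : (D Agen : Matrix (Fin 6) (Fin 6) F2) = DA6)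
    (hB : (D Bgen : Matrix (Fin 6) (Fin 6) F2) = DB6) (h : G3ᵐᵒᵖ) :
    fanoIncl.comp (polyAct D h.unop) = (permuteVars F2 FanoPoint h).comp fanoIncl := by
  have commutes : (fanoIncl.comp fanoProj).comp (permuteVars F2 FanoPoint h) =
      (permuteVars F2 FanoPoint h).comp (fanoIncl.comp fanoProj) := by
    refine algHom_ext fun v => ?_
    simp only [AlgHom.comp_apply, rename_X, fanoIncl_fanoProj_X, map_add, permuteVars_fanoForm]
  calc fanoIncl.comp (polyAct D h.unop)
      = (fanoIncl.comp ((polyAct D h.unop).comp fanoProj)).comp fanoIncl := by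
        rw [AlgHom.comp_assoc, AlgHom.comp_assoc, fanoProj_fanoIncl, AlgHom.comp_id]
    _ = ((fanoIncl.comp fanoProj).comp (permuteVars F2 FanoPoint h)).comp fanoIncl := by
        rw [← fanoProj_comp_permuteVars hA hB, AlgHom.comp_assoc fanoIncl fanoProj]
    _ = (permuteVars F2 FanoPoint h).comp (fanoIncl.comp (fanoProj.comp fanoIncl)) := by
        rw [commutes, AlgHom.comp_assoc, AlgHom.comp_assoc]
    _ = (permuteVars F2 FanoPoint h).comp fanoIncl := by rw [fanoProj_fanoIncl, AlgHom.comp_id]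

theorem splitsOffForm_fanoForm (hA : (D Agen : Matrix (Fin 6) (Fin 6) F2) = DA6)
    (hB : (D Bgen : Matrix (Fin 6) (Fin 6) F2) = DB6) :
    SplitsOffForm (permuteVars (H := G3ᵐᵒᵖ) F2 FanoPoint) (fun h => polyAct D h.unop)
      fanoForm fanoProj fanoIncl where
  form_isHomogeneous := IsHomogeneous.sum _ _ _ fun v _ => isHomogeneous_X F2 v
  form_ne_zero := fanoForm_ne_zero
  map_form := permuteVars_fanoForm
  proj_X_isHomogeneous v := by
    rw [fanoProj, bind₁_X_right]
    exact toMvPolynomial_isHomogeneous _ _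
  incl_X_isHomogeneous i := by
    rw [fanoIncl, bind₁_X_right]
    exact toMvPolynomial_isHomogeneous _ _
  proj_form := fanoProj_fanoForm
  proj_incl := fanoProj_fanoIncl
  form_dvd_X_sub v := ⟨-1, by rw [fanoIncl_fanoProj_X]; ring⟩
  proj_comp := fanoProj_comp_permuteVars hA hB
  incl_comp := fanoIncl_comp_polyAct hA hB

lemma invariantForms_polyAct (D : G3 →* GL (Fin 6) F2) (d : ℕ) :
    invariantForms (fun h : G3ᵐᵒᵖ => polyAct D h.unop) d =
      (invG D).toSubmodule ⊓ homogeneousSubmodule (Fin 6) F2 d :=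
  Submodule.ext fun _ =>
    ⟨fun hp => ⟨fun g _ => hp.2 (.op g), hp.1⟩, fun hp => ⟨hp.2, fun h => hp.1 h.unop trivial⟩⟩

lemma hilbertSeries_polyAct (D : G3 →* GL (Fin 6) F2) :
    hilbertSeries (fun h : G3ᵐᵒᵖ => polyAct D h.unop) = PowerSeries.mk fun d =>
      (Module.finrank F2 ((invG D).toSubmodule ⊓ homogeneousSubmodule (Fin 6) F2 d :
        Submodule F2 (MvPolynomial (Fin 6) F2)) : ℤ) := by
  ext d
  rw [hilbertSeries, PowerSeries.coeff_mk, PowerSeries.coeff_mk, invariantForms_polyAct]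

end VeroneseSplitting

section HilbertSeriesIdentity

lemma mul_eq_of_mul_eq_sum_geometricSeries {H : PowerSeries ℤ}
    (hH : 168 * H = geometricSeries 1 ^ 7 + 21 * (geometricSeries 1 ^ 3 * geometricSeries 2 ^ 2) +
      56 * (geometricSeries 1 * geometricSeries 3 ^ 2) +
      42 * (geometricSeries 1 * geometricSeries 2 * geometricSeries 4) + 48 * geometricSeries 7) :
    (H * (1 - PowerSeries.X)) * ((1 - PowerSeries.X ^ 2) * (1 - PowerSeries.X ^ 3) ^ 2 *
      (1 - PowerSeries.X ^ 4) * (1 - PowerSeries.X ^ 6) * (1 - PowerSeries.X ^ 7)) =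
    1 + PowerSeries.X ^ 4 + 2 * PowerSeries.X ^ 5 + PowerSeries.X ^ 6 + PowerSeries.X ^ 7 +
      PowerSeries.X ^ 8 + 2 * PowerSeries.X ^ 9 + 2 * PowerSeries.X ^ 10 +
      PowerSeries.X ^ 11 + PowerSeries.X ^ 12 + PowerSeries.X ^ 13 +
      2 * PowerSeries.X ^ 14 + PowerSeries.X ^ 15 + PowerSeries.X ^ 19 := by
  have h₁ := geometricSeries_mul_one_sub_X_pow one_ne_zero
  have h₂ := geometricSeries_mul_one_sub_X_pow two_ne_zero
  have h₃ := geometricSeries_mul_one_sub_X_pow three_ne_zero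
  have h₄ := geometricSeries_mul_one_sub_X_pow four_ne_zero
  have h₇ := geometricSeries_mul_one_sub_X_pow (k := 7) (by norm_num)
  generalize (PowerSeries.X : PowerSeries ℤ) = t at *
  generalize geometricSeries 1 = s₁ at *
  generalize geometricSeries 2 = s₂ at *
  generalize geometricSeries 3 = s₃ at *
  generalize geometricSeries 4 = s₄ at *
  have order_one : s₁ ^ 7 * (1 - t ^ 1) ^ 7 = 1 := by rw [← mul_pow, h₁, one_pow]
  have order_two : s₁ ^ 3 * s₂ ^ 2 * ((1 - t ^ 1) ^ 3 * (1 - t ^ 2) ^ 2) = 1 := by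
    rw [mul_mul_mul_comm, ← mul_pow, ← mul_pow, h₁, h₂, one_pow, one_pow, one_mul]
  have order_three : s₁ * s₃ ^ 2 * ((1 - t ^ 1) * (1 - t ^ 3) ^ 2) = 1 := by
    rw [mul_mul_mul_comm, ← mul_pow, h₁, h₃, one_pow, one_mul]
  have order_four : s₁ * s₂ * s₄ * ((1 - t ^ 1) * (1 - t ^ 2) * (1 - t ^ 4)) = 1 := by
    rw [mul_mul_mul_comm, mul_mul_mul_comm s₁, h₁, h₂, h₄, one_mul, one_mul]
  have : CharZero (PowerSeries ℤ) :=
    charZero_of_injective_ringHom PowerSeries.C_injective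
  refine mul_left_cancel₀ (OfNat.ofNat_ne_zero 168) ?_
  linear_combination ((1 - t) * ((1 - t ^ 2) * (1 - t ^ 3) ^ 2 * (1 - t ^ 4) * (1 - t ^ 6) *
      (1 - t ^ 7))) * hH +
    ((1 + t) * (1 + t + t ^ 2) ^ 2 * (1 + t + t ^ 2 + t ^ 3) *
      (1 + t + t ^ 2 + t ^ 3 + t ^ 4 + t ^ 5) *
      (1 + t + t ^ 2 + t ^ 3 + t ^ 4 + t ^ 5 + t ^ 6)) * order_one +
    21 * ((1 + t + t ^ 2) ^ 2 * (1 + t ^ 2) * (1 - t ^ 6) * (1 - t ^ 7)) * order_two +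
    56 * ((1 - t ^ 2) * (1 - t ^ 4) * (1 - t ^ 6) * (1 - t ^ 7)) * order_three +
    42 * ((1 - t ^ 3) ^ 2 * (1 - t ^ 6) * (1 - t ^ 7)) * order_four +
    48 * ((1 - t) * (1 - t ^ 2) * (1 - t ^ 3) ^ 2 * (1 - t ^ 4) * (1 - t ^ 6)) * h₇

end HilbertSeriesIdentity

/-- The Hilbert series of `S[W'^*]^G` satisfies
`(Σ_d dim(S[W'^*]^G_d) t^d)·(1−t²)(1−t³)²(1−t⁴)(1−t⁶)(1−t⁷)
  = 1 + t⁴ + 2t⁵ + t⁶ + t⁷ + t⁸ + 2t⁹ + 2t¹⁰ + t¹¹ + t¹² + t¹³ + 2t¹⁴ + t¹⁵ + t¹⁹`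
as an identity of formal power series in `ℤ[[t]]`. -/
theorem stmt11 (D : G3 →* GL (Fin 6) F2)
    (hA : (D Agen : Matrix (Fin 6) (Fin 6) F2) = DA6)
    (hB : (D Bgen : Matrix (Fin 6) (Fin 6) F2) = DB6) :
    (PowerSeries.mk fun d : ℕ =>
        (Module.finrank F2
          ((invG D).toSubmodule ⊓ homogeneousSubmodule (Fin 6) F2 d :
            Submodule F2 (MvPolynomial (Fin 6) F2)) : ℤ)) *
      ((1 - PowerSeries.X ^ 2) * (1 - PowerSeries.X ^ 3) ^ 2 * (1 - PowerSeries.X ^ 4) *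
        (1 - PowerSeries.X ^ 6) * (1 - PowerSeries.X ^ 7)) =
    1 + PowerSeries.X ^ 4 + 2 * PowerSeries.X ^ 5 + PowerSeries.X ^ 6 + PowerSeries.X ^ 7 +
      PowerSeries.X ^ 8 + 2 * PowerSeries.X ^ 9 + 2 * PowerSeries.X ^ 10 +
      PowerSeries.X ^ 11 + PowerSeries.X ^ 12 + PowerSeries.X ^ 13 +
      2 * PowerSeries.X ^ 14 + PowerSeries.X ^ 15 + PowerSeries.X ^ 19 := by
  rw [← hilbertSeries_polyAct, (splitsOffForm_fanoForm hA hB).hilbertSeries_eq_mul]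
  exact mul_eq_of_mul_eq_sum_geometricSeries mul_hilbertSeries_permuteVars_fanoPoint
end

section
/- The invariant ring S[W'^*]^G is Cohen-Macaulay: there exists a homogeneous system of parameters f_1, …, f_6 of S[W'^*]^G such that S[W'^*]^G is a free module over the polynomial subalgebra F_2[f_1, …, f_6]. -/
set_option synthInstance.maxHeartbeats 1000000
set_option maxHeartbeats 1000000

open MvPolynomial

/-!
`W'^*` is the permutation module of `G` on the seven points of the Fano plane modulo the all-ones
vector, so `S = S[W'^*]` is generated by seven linear forms with sum zero which `G ≤ S₇` permutes.
As `7` is odd, `S` is an equivariant retract of `𝔽₂[y₁, …, y₇]`; hence `S^{S₇}` is the polynomial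
ring `A` in the elementary symmetric polynomials of degrees `2, …, 7` of these forms.

For subgroups `H ≤ K` of `S₇` such that `H` contains no transposition, the relative trace
`S^H → S^K` is divisible by the product of the `yᵢ + yⱼ` over the transpositions `(i j)` in `K`.
The quotient of the trace by this discriminant transfers finite projectivity over `A`

* from `S^K` up to `S^H`, if its trace form has an explicit pair of dual bases: this covers
  `S₇ ≥ 1` and `S₃ × S₄ ≥ P`, where `P` is the stabilizer in `G` of a line;
* from `S^H` down to `S^K`, if it takes the value `1`: this covers `1 ≤ S₃ × S₄` through the
  Vandermonde determinant.

The dual bases for `P` come from the resolvent cubic: its three roots `w` and the three points `z`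
of the line are permuted by `P` simultaneously, have together the same discriminant as `S₃ × S₄`,
and reduce the question to the diagonal `S₃` in `S₃ × S₃`. Since `G` has odd index `7` over `P`,
the plain trace passes from `S^P` down to `S^G`. Finally, a finite projective graded `A`-module is
free.
-/

namespace FanoInvariants

section RelativeTrace

variable {Γ S : Type*} (A : Type*) [Group Γ] [CommRing A] [CommRing S] [Algebra A S]
  [MulSemiringAction Γ S] [SMulCommClass Γ A S]

/-- The ring `S^H` of invariants of a subgroup `H`, as an `A`-subalgebra of `S`. -/
def invariants (H : Subgroup Γ) : Subalgebra A S := FixedPoints.subalgebra A S H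

variable {A}

lemma mem_invariants {H : Subgroup Γ} {s : S} :
    s ∈ invariants A H ↔ ∀ h ∈ H, h • s = s :=
  ⟨fun hs h hh => hs ⟨h, hh⟩, fun hs h => hs h h.2⟩

lemma mem_invariants_bot (s : S) : s ∈ invariants A (⊥ : Subgroup Γ) :=
  mem_invariants.2 fun h hh => by rw [Subgroup.mem_bot.1 hh, one_smul]

lemma invariants_anti {H K : Subgroup Γ} (hHK : H ≤ K) :
    invariants A (S := S) K ≤ invariants A H :=
  fun _ hs => mem_invariants.2 fun h hh => mem_invariants.1 hs h (hHK hh)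

lemma out_smul_of_mem_invariants {H K : Subgroup Γ} {g : S} (hg : g ∈ invariants A H) (k : K) :
    (((k : K ⧸ H.subgroupOf K).out : K) : Γ) • g = (k : Γ) • g := by
  obtain ⟨h, hh⟩ := QuotientGroup.mk_out_eq_mul (H.subgroupOf K) k
  rw [hh, Subgroup.coe_mul, mul_smul, mem_invariants.1 hg _ (Subgroup.mem_subgroupOf.1 h.2)]

variable (A) [Finite Γ]

/-- The relative trace `s ↦ ∑_{k ∈ K/H} k • s`, over an arbitrary choice of representatives; it is
only meaningful on `H`-invariant `s`, where it does not depend on that choice. -/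
noncomputable def relTrace (H K : Subgroup Γ) : S →ₗ[A] S :=
  letI := Fintype.ofFinite (K ⧸ H.subgroupOf K)
  ∑ q : K ⧸ H.subgroupOf K, DistribSMul.toLinearMap A S (q.out : Γ)

variable {A} {H K : Subgroup Γ}

lemma relTrace_apply [Fintype (K ⧸ H.subgroupOf K)] (s : S) :
    relTrace A H K s = ∑ q : K ⧸ H.subgroupOf K, (q.out : Γ) • s := by
  simp only [relTrace, LinearMap.sum_apply, DistribSMul.toLinearMap_apply]
  congr!

lemma relTrace_mem_invariants {g : S} (hg : g ∈ invariants A H) :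
    relTrace A H K g ∈ invariants A K := by
  have := Fintype.ofFinite (K ⧸ H.subgroupOf K)
  refine mem_invariants.2 fun k hk => ?_
  rw [relTrace_apply, Finset.smul_sum]
  refine Fintype.sum_equiv (MulAction.toPerm (⟨k, hk⟩ : K)) _ _ fun q => ?_
  obtain ⟨l, rfl⟩ := QuotientGroup.mk_surjective q
  rw [MulAction.toPerm_apply, MulAction.Quotient.smul_coe, out_smul_of_mem_invariants hg,
    out_smul_of_mem_invariants hg, smul_eq_mul, Subgroup.coe_mul, mul_smul]

lemma relTrace_mul {s : S} (hs : s ∈ invariants A K) (t : S) :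
    relTrace A H K (s * t) = s * relTrace A H K t := by
  have := Fintype.ofFinite (K ⧸ H.subgroupOf K)
  simp only [relTrace_apply, smul_mul', mem_invariants.1 hs _ (SetLike.coe_mem _), Finset.mul_sum]

lemma relTrace_one : relTrace A H K (1 : S) = (H.relIndex K : S) := by
  have := Fintype.ofFinite (K ⧸ H.subgroupOf K)
  simp [relTrace_apply, Subgroup.relIndex, Subgroup.index, Nat.card_eq_fintype_card]

lemma relTrace_bot [Fintype K] (s : S) : relTrace A ⊥ K s = ∑ k : K, (k : Γ) • s := by
  have := Fintype.ofFinite (K ⧸ (⊥ : Subgroup Γ).subgroupOf K)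
  rw [relTrace_apply]
  refine (Fintype.sum_bijective _ ⟨fun k l hkl => ?_, QuotientGroup.mk_surjective⟩ _ _ fun k =>
    (out_smul_of_mem_invariants (A := A) (mem_invariants_bot s) k).symm).symm
  simpa [QuotientGroup.eq, Subgroup.mem_subgroupOf, inv_mul_eq_one] using hkl

/-- The involution `q ↦ t • q` of `K / H` has no fixed point and pairs off the terms of the trace
modulo `l`. -/
lemma dvd_relTrace {l g : S} {t : Γ} (ht : t ∈ K) (htt : t * t = 1)
    (hconj : ∀ k ∈ K, k⁻¹ * t * k ∉ H) (hl : ∀ s : S, l ∣ t • s + s)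
    (hg : g ∈ invariants A H) : l ∣ relTrace A H K g := by
  have := Fintype.ofFinite (K ⧸ H.subgroupOf K)
  have htt' : (⟨t, ht⟩ : K) * ⟨t, ht⟩ = 1 := Subtype.ext htt
  rw [relTrace_apply, ← Ideal.mem_span_singleton, ← Ideal.Quotient.eq_zero_iff_mem, map_sum]
  refine Finset.sum_involution (fun q _ => (⟨t, ht⟩ : K) • q) (fun q _ => ?_) (fun q _ _ hq => ?_)
    (fun _ _ => Finset.mem_univ _) fun q _ => by rw [← mul_smul, htt', one_smul]
  all_goals obtain ⟨k, rfl⟩ := QuotientGroup.mk_surjective q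
  · rw [← map_add, Ideal.Quotient.eq_zero_iff_mem, Ideal.mem_span_singleton, add_comm,
      MulAction.Quotient.smul_coe, out_smul_of_mem_invariants hg, out_smul_of_mem_invariants hg,
      smul_eq_mul, Subgroup.coe_mul, mul_smul]
    exact hl _
  · rw [MulAction.Quotient.smul_coe, eq_comm, QuotientGroup.eq, Subgroup.mem_subgroupOf] at hq
    exact hconj k k.2 (by simpa [mul_assoc] using hq)

end RelativeTrace

lemma finite_and_projective_of_retract {A M P : Type*} [Ring A] [AddCommGroup M] [Module A M]
    [AddCommGroup P] [Module A P] [Module.Finite A M] [Module.Projective A M]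
    (i : P →ₗ[A] M) (r : M →ₗ[A] P) (hri : ∀ p, r (i p) = p) :
    Module.Finite A P ∧ Module.Projective A P :=
  ⟨.of_surjective r fun p => ⟨i p, hri p⟩, .of_split i r (LinearMap.ext hri)⟩

lemma exists_linearMap_mul_eq {A S M : Type*} [CommRing A] [CommRing S] [IsDomain S] [Algebra A S]
    [AddCommGroup M] [Module A M] {d : S} (hd : d ≠ 0) (f : M →ₗ[A] S) (hf : ∀ m, d ∣ f m) :
    ∃ g : M →ₗ[A] S, ∀ m, d * g m = f m := by
  choose g hg using hf
  refine ⟨{ toFun := g, map_add' := fun a b => ?_, map_smul' := fun c a => ?_ },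
    fun m => (hg m).symm⟩
  · apply mul_left_cancel₀ hd
    rw [mul_add, ← hg, ← hg, ← hg, map_add]
  · apply mul_left_cancel₀ hd
    rw [RingHom.id_apply, mul_smul_comm, ← hg, ← hg, map_smul]

lemma out_mem_iff {Γ : Type*} [Group Γ] {H K : Subgroup Γ} (q : K ⧸ H.subgroupOf K) :
    ((q.out : K) : Γ) ∈ H ↔ q = (1 : K) := by
  rw [← Subgroup.mem_subgroupOf, ← q.out_eq', eq_comm, QuotientGroup.eq]
  simp

section Descent

variable {Γ A S : Type*} [Group Γ] [Finite Γ] [CommRing A] [CommRing S] [IsDomain S] [Algebra A S]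
  [MulSemiringAction Γ S] [SMulCommClass Γ A S] {H K : Subgroup Γ} {d : S}

lemma exists_linearMap_mul_eq_relTrace (hd : d ≠ 0) (hdK : d ∈ invariants A K)
    (hdvd : ∀ g ∈ invariants A H, d ∣ relTrace A H K g) :
    ∃ T : invariants A (S := S) H →ₗ[A] invariants A (S := S) K,
      ∀ g : invariants A (S := S) H, d * (T g : S) = relTrace A H K (g : S) := by
  obtain ⟨T, hT⟩ := exists_linearMap_mul_eq hd
    (relTrace A H K ∘ₗ (invariants A (S := S) H).val.toLinearMap) fun g => hdvd g g.2
  refine ⟨T.codRestrict (Subalgebra.toSubmodule (invariants A K)) fun g => ?_, hT⟩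
  change T g ∈ invariants A K
  refine mem_invariants.2 fun k hk => mul_left_cancel₀ hd ?_
  calc d * k • T g = k • (d * T g) := by rw [smul_mul', mem_invariants.1 hdK k hk]
    _ = d * T g := by rw [hT]; exact mem_invariants.1 (relTrace_mem_invariants g.2) k hk

/-- `s ↦ θ s` embeds `S^K` as a direct summand of `S^H`. -/
theorem finite_and_projective_invariants_of_le (hHK : H ≤ K) (hd : d ≠ 0)
    (hdvd : ∀ g ∈ invariants A H, d ∣ relTrace A H K g)
    {θ : S} (hθ : θ ∈ invariants A H) (hθd : relTrace A H K θ = d)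
    [Module.Finite A (invariants A (S := S) H)] [Module.Projective A (invariants A (S := S) H)] :
    Module.Finite A (invariants A (S := S) K) ∧ Module.Projective A (invariants A (S := S) K) := by
  obtain ⟨T, hT⟩ := exists_linearMap_mul_eq_relTrace hd
    (hθd ▸ relTrace_mem_invariants hθ) hdvd
  let incl := Subalgebra.inclusion (invariants_anti (A := A) (S := S) hHK)
  refine finite_and_projective_of_retract
    (LinearMap.mulRight A ⟨θ, hθ⟩ ∘ₗ incl.toLinearMap) T fun s => ?_
  refine Subtype.ext (mul_left_cancel₀ hd ?_)
  calc d * (T (incl s * ⟨θ, hθ⟩) : S) = relTrace A H K (s * θ) := hT _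
    _ = d * s := by rw [relTrace_mul s.2, hθd, mul_comm]

/-- Writing `T` for the trace divided by `d`, every `s ∈ S^H` equals `∑ j, h j * T (h' j * s)`, so
that `S^H` is a direct summand of a power of `S^K`. -/
theorem finite_and_projective_invariants_of_ge {J : Type*} [Fintype J] (hHK : H ≤ K) (hd : d ≠ 0)
    (hdK : d ∈ invariants A K) (hdvd : ∀ g ∈ invariants A H, d ∣ relTrace A H K g)
    {h h' : J → S} (hh : ∀ j, h j ∈ invariants A H) (hh' : ∀ j, h' j ∈ invariants A H)
    (hsum_mem : ∀ k ∈ H, ∑ j, h j * k • h' j = d)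
    (hsum_notMem : ∀ k ∈ K, k ∉ H → ∑ j, h j * k • h' j = 0)
    [Module.Finite A (invariants A (S := S) K)] [Module.Projective A (invariants A (S := S) K)] :
    Module.Finite A (invariants A (S := S) H) ∧ Module.Projective A (invariants A (S := S) H) := by
  have := Fintype.ofFinite (K ⧸ H.subgroupOf K)
  obtain ⟨T, hT⟩ := exists_linearMap_mul_eq_relTrace hd hdK hdvd
  let incl := Subalgebra.inclusion (invariants_anti (A := A) (S := S) hHK)
  have : Module.Projective A (J → invariants A (S := S) K) := by
    classical
    exact .of_equiv (DirectSum.linearEquivFunOnFintype A J fun _ => invariants A (S := S) K)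
  refine finite_and_projective_of_retract (M := J → invariants A (S := S) K)
    (LinearMap.pi fun j => T ∘ₗ LinearMap.mulLeft A ⟨h' j, hh' j⟩)
    (∑ j, LinearMap.mulLeft A ⟨h j, hh j⟩ ∘ₗ incl.toLinearMap ∘ₗ LinearMap.proj j) fun s => ?_
  refine Subtype.ext (mul_left_cancel₀ hd ?_)
  calc d * ((∑ j, LinearMap.mulLeft A ⟨h j, hh j⟩ ∘ₗ incl.toLinearMap ∘ₗ LinearMap.proj j)
        (LinearMap.pi (fun j => T ∘ₗ LinearMap.mulLeft A ⟨h' j, hh' j⟩) s) : S)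
      = ∑ j, h j * (d * (T (⟨h' j, hh' j⟩ * s) : S)) := by
        simp [incl, Finset.mul_sum, mul_left_comm]
    _ = ∑ q : K ⧸ H.subgroupOf K, (∑ j, h j * (q.out : Γ) • h' j) * (q.out : Γ) • (s : S) := by
        simp_rw [hT, MulMemClass.coe_mul, relTrace_apply, smul_mul', Finset.mul_sum, Finset.sum_mul,
          mul_assoc]
        exact Finset.sum_comm
    _ = d * s := by
        rw [Finset.sum_eq_single ((1 : K) : K ⧸ H.subgroupOf K) (fun q _ hq => ?_) (by simp),
          hsum_mem _ ((out_mem_iff _).2 rfl), mem_invariants.1 s.2 _ ((out_mem_iff _).2 rfl)]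
        rw [hsum_notMem _ (SetLike.coe_mem _) (mt (out_mem_iff q).1 hq), zero_mul]

end Descent

section Permutations

open Equiv Equiv.Perm

lemma not_isSwap_of_mem_bot {ι : Type*} [DecidableEq ι] :
    ∀ τ ∈ (⊥ : Subgroup (Perm ι)), ¬ τ.IsSwap := by
  rintro τ hτ ⟨i, j, hij, rfl⟩
  exact hij (swap_eq_one_iff.1 (Subgroup.mem_bot.1 hτ))

lemma isSwap_conj_iff {ι : Type*} [DecidableEq ι] {σ τ : Perm ι} :
    (σ * τ * σ⁻¹).IsSwap ↔ τ.IsSwap := by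
  have isSwap_conj (σ : Perm ι) {τ : Perm ι} (hτ : τ.IsSwap) : (σ * τ * σ⁻¹).IsSwap := by
    obtain ⟨i, j, hij, rfl⟩ := hτ
    exact ⟨σ i, σ j, σ.injective.ne hij, (swap_apply_apply σ i j).symm⟩
  refine ⟨fun h => ?_, isSwap_conj σ⟩
  simpa [mul_assoc] using isSwap_conj σ⁻¹ h

variable {ι S : Type*} [Fintype ι] [DecidableEq ι] [CommRing S]

lemma eq_of_isSwap_of_support_eq {σ τ : Perm ι}
    (hσ : σ.IsSwap) (hτ : τ.IsSwap) (h : σ.support = τ.support) : σ = τ := by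
  obtain ⟨a, b, hab, rfl⟩ := hσ
  obtain ⟨c, d, hcd, rfl⟩ := hτ
  rw [support_swap hab, support_swap hcd, ← Finset.coe_inj, Finset.coe_pair,
    Finset.coe_pair, Set.pair_eq_pair_iff] at h
  rcases h with ⟨rfl, rfl⟩ | ⟨rfl, rfl⟩
  exacts [rfl, swap_comm a b]

/-- The linear form cut out by a transposition: `root y (swap i j) = y i + y j`. In characteristic
two it vanishes exactly where the transposition acts trivially. -/
def root (y : ι → S) (τ : Perm ι) : S := ∑ i ∈ τ.support, y i

lemma root_swap (y : ι → S) {i j : ι} (hij : i ≠ j) : root y (swap i j) = y i + y j := by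
  rw [root, support_swap hij, Finset.sum_pair hij]

open Classical in
/-- The transpositions contained in `K`. -/
noncomputable def swaps (K : Subgroup (Perm ι)) : Finset (Perm ι) := {τ | τ.IsSwap ∧ τ ∈ K}

lemma mem_swaps {K : Subgroup (Perm ι)} {τ : Perm ι} : τ ∈ swaps K ↔ τ.IsSwap ∧ τ ∈ K := by
  simp [swaps]

/-- The product of the roots of the transpositions in `K`. -/
noncomputable def discr (y : ι → S) (K : Subgroup (Perm ι)) : S := ∏ τ ∈ swaps K, root y τ

variable [MulSemiringAction (Perm ι) S]

/-- A family of generators of the `A`-algebra `S` which is permuted by `Perm ι` according to the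
indices and whose roots are pairwise coprime. -/
structure IsPermuted (A : Type*) [CommRing A] [Algebra A S] (y : ι → S) : Prop where
  smul_apply (σ : Perm ι) (i : ι) : σ • y i = y (σ i)
  adjoin_range : Algebra.adjoin A (Set.range y) = ⊤
  injective : Function.Injective y
  pairwise_isRelPrime : {τ : Perm ι | τ.IsSwap}.Pairwise (Function.onFun IsRelPrime (root y))

namespace IsPermuted

variable {A : Type*} [CommRing A] [Algebra A S] {y : ι → S}

lemma smul_root (hy : IsPermuted A y) (σ τ : Perm ι) : σ • root y τ = root y (σ * τ * σ⁻¹) := by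
  simp [root, support_conj, Finset.smul_sum, hy.smul_apply]

lemma discr_ne_zero [IsDomain S] [CharP S 2] (hy : IsPermuted A y) (K : Subgroup (Perm ι)) :
    discr y K ≠ 0 := by
  refine Finset.prod_ne_zero_iff.2 fun τ hτ => ?_
  obtain ⟨⟨i, j, hij, rfl⟩, -⟩ := mem_swaps.1 hτ
  rw [root_swap y hij, Ne, CharTwo.add_eq_zero]
  exact hy.injective.ne hij

variable [SMulCommClass (Perm ι) A S] {H K : Subgroup (Perm ι)}

lemma discr_mem_invariants (hy : IsPermuted A y) (K : Subgroup (Perm ι)) :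
    discr y K ∈ invariants A K := by
  refine mem_invariants.2 fun k hk => ?_
  rw [discr, Finset.smul_prod']
  refine Finset.prod_equiv (MulAut.conj k).toEquiv (fun τ => ?_) fun τ _ => hy.smul_root k τ
  simp [mem_swaps, isSwap_conj_iff, mul_mem_cancel_right (inv_mem hk), mul_mem_cancel_left hk]

variable [CharP S 2]

lemma root_dvd (hy : IsPermuted A y) {τ : Perm ι} (hτ : τ.IsSwap) (s : S) :
    root y τ ∣ τ • s + s := by
  obtain ⟨i, j, hij, rfl⟩ := hτ
  have hs : s ∈ Algebra.adjoin A (Set.range y) := hy.adjoin_range ▸ Algebra.mem_top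
  rw [root_swap y hij]
  induction hs using Algebra.adjoin_induction with
  | mem x hx =>
    obtain ⟨k, rfl⟩ := hx
    rw [hy.smul_apply]
    rcases eq_or_ne k i with rfl | hki
    · rw [swap_apply_left, add_comm]
    rcases eq_or_ne k j with rfl | hkj
    · rw [swap_apply_right]
    · simp [swap_apply_of_ne_of_ne hki hkj, CharTwo.add_self_eq_zero]
  | algebraMap r => simp [smul_algebraMap, CharTwo.add_self_eq_zero]
  | add a b _ _ ha hb =>
    rw [smul_add, add_add_add_comm]
    exact dvd_add ha hb
  | mul a b _ _ ha hb =>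
    have key : swap i j • (a * b) + a * b =
        (swap i j • a + a) * swap i j • b + a * (swap i j • b + b) := by
      rw [smul_mul', add_mul, mul_add, add_add_add_comm, add_assoc (_ * _),
        ← add_assoc (a * _), CharTwo.add_self_eq_zero, zero_add]
    exact key ▸ dvd_add (ha.mul_right _) (hb.mul_left _)

lemma discr_dvd_relTrace [DecompositionMonoid S] (hy : IsPermuted A y)
    (hH : ∀ τ ∈ H, ¬ τ.IsSwap) {g : S} (hg : g ∈ invariants A H) :
    discr y K ∣ relTrace A H K g := by
  refine Finset.prod_dvd_of_isRelPrime
    (hy.pairwise_isRelPrime.mono fun τ hτ => (mem_swaps.1 hτ).1) fun τ hτ => ?_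
  obtain ⟨hswap, hτK⟩ := mem_swaps.1 hτ
  refine dvd_relTrace hτK (hswap.elim fun i ⟨j, _, h⟩ => h ▸ swap_mul_self i j)
    (fun k _ hk => hH _ hk ?_) (hy.root_dvd hswap) hg
  simpa using (isSwap_conj_iff (σ := k⁻¹)).2 hswap

end IsPermuted

end Permutations

section LinearOrder

open Equiv Equiv.Perm

lemma exists_apply_lt {ι : Type*} [LinearOrder ι] [WellFoundedGT ι] {σ : Perm ι} (hσ : σ ≠ 1) :
    ∃ i, σ i < i := by
  by_contra! hle
  refine hσ (Equiv.ext fun i => ?_)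
  induction i using WellFoundedGT.induction with
  | ind i ih =>
    by_contra hi
    exact hi (σ.injective (ih _ ((hle i).lt_of_ne' hi)))

variable {ι S : Type*} [Fintype ι] [LinearOrder ι] [CommRing S]

lemma discr_eq_prod_lt (y : ι → S) (K : Subgroup (Perm ι)) [DecidablePred (· ∈ K)] :
    discr y K = ∏ p : ι × ι with p.1 < p.2 ∧ swap p.1 p.2 ∈ K, (y p.1 + y p.2) := by
  symm
  refine Finset.prod_bij (fun p _ => swap p.1 p.2) (fun p hp => ?_) ?_ (fun τ hτ => ?_)
    fun p hp => ?_
  · obtain ⟨hlt, hK⟩ := (Finset.mem_filter_univ _).1 hp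
    exact mem_swaps.2 ⟨⟨_, _, hlt.ne, rfl⟩, hK⟩
  · rintro ⟨i, j⟩ hp ⟨k, l⟩ hq (h : swap i j = swap k l)
    have hij : i < j := ((Finset.mem_filter_univ _).1 hp).1
    have hkl : k < l := ((Finset.mem_filter_univ _).1 hq).1
    have hsupp : ({i, j} : Set ι) = {k, l} := by
      rw [← Finset.coe_pair, ← support_swap hij.ne, h, support_swap hkl.ne, Finset.coe_pair]
    rcases Set.pair_eq_pair_iff.1 hsupp with ⟨rfl, rfl⟩ | ⟨rfl, rfl⟩
    · rfl
    · exact absurd hij hkl.asymm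
  · obtain ⟨⟨i, j, hij, rfl⟩, hK⟩ := mem_swaps.1 hτ
    rcases hij.lt_or_gt with hlt | hlt
    · exact ⟨(i, j), (Finset.mem_filter_univ _).2 ⟨hlt, hK⟩, rfl⟩
    · exact ⟨(j, i), (Finset.mem_filter_univ _).2 ⟨hlt, swap_comm i j ▸ hK⟩, swap_comm j i⟩
  · rw [root_swap y ((Finset.mem_filter_univ _).1 hp).1.ne]

variable [MulSemiringAction (Perm ι) S] {A : Type*} [CommRing A] [Algebra A S] {y : ι → S}

lemma sum_finset_prod_mul_smul_prod [CharP S 2] (hy : IsPermuted A y) (σ : Perm ι) :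
    ∑ t : Finset {p : ι × ι // p.1 < p.2},
      (∏ p ∈ t, y p.1.1) * σ • ∏ p ∈ tᶜ, y p.1.2 = if σ = 1 then discr y ⊤ else 0 := by
  classical
  simp_rw [Finset.smul_prod', hy.smul_apply, ← Fintype.prod_add]
  split_ifs with hσ
  · rw [discr_eq_prod_lt, Finset.prod_subtype (F := inferInstance)
      (p := fun p : ι × ι => p.1 < p.2) _ (by simp)]
    simp [hσ]
  · obtain ⟨i, hi⟩ := exists_apply_lt hσ
    exact Finset.prod_eq_zero (Finset.mem_univ ⟨(σ i, i), hi⟩) (CharTwo.add_self_eq_zero _)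

theorem finite_and_projective_invariants_bot [IsDomain S] [DecompositionMonoid S] [CharP S 2]
    [SMulCommClass (Perm ι) A S] [FaithfulSMul A S] (hy : IsPermuted A y)
    (hA : invariants A (S := S) (⊤ : Subgroup (Perm ι)) = ⊥) :
    Module.Finite A (invariants A (S := S) (⊥ : Subgroup (Perm ι))) ∧
      Module.Projective A (invariants A (S := S) (⊥ : Subgroup (Perm ι))) := by
  let e := Algebra.botEquivOfInjective (FaithfulSMul.algebraMap_injective A S)
  have : Module.Finite A (invariants A (S := S) (⊤ : Subgroup (Perm ι))) :=
    hA ▸ .equiv e.toLinearEquiv.symm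
  have : Module.Projective A (invariants A (S := S) (⊤ : Subgroup (Perm ι))) :=
    hA ▸ .of_equiv e.toLinearEquiv.symm
  exact finite_and_projective_invariants_of_ge bot_le (hy.discr_ne_zero ⊤)
    (hy.discr_mem_invariants ⊤) (fun g hg => hy.discr_dvd_relTrace not_isSwap_of_mem_bot hg)
    (fun _ => mem_invariants_bot _) (fun _ => mem_invariants_bot _)
    (fun σ hσ => (sum_finset_prod_mul_smul_prod hy σ).trans (if_pos hσ))
    (fun σ _ hσ => (sum_finset_prod_mul_smul_prod hy σ).trans (if_neg hσ))

end LinearOrder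

section Young

open Equiv Equiv.Perm

lemma sum_perm_prod_pow {S : Type*} [CommRing S] [CharP S 2] {n : ℕ} (v : Fin n → S) :
    ∑ σ : Perm (Fin n), ∏ i, v (σ i) ^ (i : ℕ) = ∏ i, ∏ j ∈ Finset.Ioi i, (v i + v j) := by
  have sign_smul (σ : Perm (Fin n)) (s : S) : sign σ • s = s := by
    rcases Int.units_eq_one_or (sign σ) with h | h <;> simp [h, Units.smul_def, CharTwo.neg_eq]
  calc ∑ σ : Perm (Fin n), ∏ i, v (σ i) ^ (i : ℕ) = (Matrix.vandermonde v).det := by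
        simp only [Matrix.det_apply, sign_smul, Matrix.vandermonde_apply]
    _ = _ := by simp only [Matrix.det_vandermonde, CharTwo.sub_eq_add, add_comm]

variable (m n : ℕ)

/-- The action of `Perm (Fin m) × Perm (Fin n)` on the first `m` and the last `n` of `m + n`
points. -/
def youngHom : Perm (Fin m) × Perm (Fin n) →* Perm (Fin (m + n)) :=
  finSumFinEquiv.permCongrHom.toMonoidHom.comp (sumCongrHom (Fin m) (Fin n))

/-- The Young subgroup `S_m × S_n` of `S_{m+n}`. -/
def young : Subgroup (Perm (Fin (m + n))) := (youngHom m n).range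

variable {m n}

@[simp] lemma youngHom_castAdd (a : Perm (Fin m)) (b : Perm (Fin n)) (i : Fin m) :
    youngHom m n (a, b) (Fin.castAdd n i) = Fin.castAdd n (a i) := by
  simp [youngHom]

@[simp] lemma youngHom_natAdd (a : Perm (Fin m)) (b : Perm (Fin n)) (i : Fin n) :
    youngHom m n (a, b) (Fin.natAdd m i) = Fin.natAdd m (b i) := by
  simp [youngHom]

lemma youngHom_injective : Function.Injective (youngHom m n) :=
  finSumFinEquiv.permCongrHom.injective.comp sumCongrHom_injective

lemma castAdd_ne_natAdd (i : Fin m) (j : Fin n) : Fin.castAdd n i ≠ Fin.natAdd m j :=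
  fun h => Sum.inl_ne_inr (finSumFinEquiv.injective h)

lemma swap_castAdd_mem_young (i j : Fin m) :
    swap (Fin.castAdd n i) (Fin.castAdd n j) ∈ young m n :=
  ⟨(swap i j, 1), Equiv.ext fun k => by
    induction k using Fin.addCases with
    | left k => simp [swap_apply_def, apply_ite (Fin.castAdd n)]
    | right k =>
      have ne (l : Fin m) : Fin.natAdd m k ≠ Fin.castAdd n l := (castAdd_ne_natAdd l k).symm
      rw [youngHom_natAdd, one_apply, swap_apply_of_ne_of_ne (ne i) (ne j)]⟩

lemma swap_natAdd_mem_young (i j : Fin n) :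
    swap (Fin.natAdd m i) (Fin.natAdd m j) ∈ young m n :=
  ⟨(1, swap i j), Equiv.ext fun k => by
    induction k using Fin.addCases with
    | left k =>
      have ne (l : Fin n) : Fin.castAdd n k ≠ Fin.natAdd m l := castAdd_ne_natAdd k l
      rw [youngHom_castAdd, one_apply, swap_apply_of_ne_of_ne (ne i) (ne j)]
    | right k => simp [swap_apply_def, apply_ite (Fin.natAdd m)]⟩

lemma swap_castAdd_natAdd_notMem_young (i : Fin m) (j : Fin n) :
    swap (Fin.castAdd n i) (Fin.natAdd m j) ∉ young m n := by
  rintro ⟨⟨a, b⟩, h⟩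
  have apply_eq : Fin.castAdd n (a i) = Fin.natAdd m j := by
    rw [← youngHom_castAdd a b, h, swap_apply_left]
  exact castAdd_ne_natAdd (a i) j apply_eq

variable {S : Type*} [CommRing S]

lemma discr_young (y : Fin (m + n) → S) :
    discr y (young m n) =
      (∏ i, ∏ j ∈ Finset.Ioi i, (y (Fin.castAdd n i) + y (Fin.castAdd n j))) *
      ∏ i, ∏ j ∈ Finset.Ioi i, (y (Fin.natAdd m i) + y (Fin.natAdd m j)) := by
  classical
  have castAdd_lt (i j : Fin m) : Fin.castAdd n i < Fin.castAdd n j ↔ i < j := Iff.rfl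
  have not_natAdd_lt (i : Fin n) (j : Fin m) : ¬ Fin.natAdd m i < Fin.castAdd n j := by
    simp only [Fin.lt_def, Fin.val_natAdd, Fin.val_castAdd]
    lia
  simp [castAdd_lt, not_natAdd_lt, discr_eq_prod_lt, Finset.prod_filter,
    Fintype.prod_prod_type, Fin.prod_univ_add, swap_castAdd_mem_young,
    swap_natAdd_mem_young, swap_castAdd_natAdd_notMem_young, ← Finset.filter_lt_eq_Ioi]

variable [CharP S 2] [MulSemiringAction (Perm (Fin (m + n))) S] {A : Type*} [CommRing A]
  [Algebra A S] [SMulCommClass (Perm (Fin (m + n))) A S] {y : Fin (m + n) → S}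

lemma relTrace_bot_young (hy : IsPermuted A y) :
    relTrace A ⊥ (young m n)
      ((∏ i, y (Fin.castAdd n i) ^ (i : ℕ)) * ∏ i, y (Fin.natAdd m i) ^ (i : ℕ)) =
    discr y (young m n) := by
  classical
  rw [relTrace_bot, discr_young, ← sum_perm_prod_pow, ← sum_perm_prod_pow, Fintype.sum_mul_sum,
    ← Fintype.sum_prod_type']
  have bijective : Function.Bijective fun p => (⟨youngHom m n p, p, rfl⟩ : young m n) :=
    ⟨fun p q h => youngHom_injective (congrArg Subtype.val h), fun ⟨_, p, h⟩ => ⟨p, Subtype.ext h⟩⟩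
  refine (Fintype.sum_bijective _ bijective _ _ fun ⟨a, b⟩ => ?_).symm
  simp [Finset.smul_prod', hy.smul_apply]

theorem finite_and_projective_invariants_young [IsDomain S] [DecompositionMonoid S]
    [FaithfulSMul A S] (hy : IsPermuted A y)
    (hA : invariants A (S := S) (⊤ : Subgroup (Perm (Fin (m + n)))) = ⊥) :
    Module.Finite A (invariants A (S := S) (young m n)) ∧
      Module.Projective A (invariants A (S := S) (young m n)) := by
  obtain ⟨_, _⟩ := finite_and_projective_invariants_bot hy hA
  exact finite_and_projective_invariants_of_le bot_le (hy.discr_ne_zero _)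
    (fun g hg => hy.discr_dvd_relTrace not_isSwap_of_mem_bot hg) (mem_invariants_bot _)
    (relTrace_bot_young hy)

end Young

section TwoTriples

open Equiv

variable {R : Type*} [CommRing R]

/-- The polarized power sum `∑ wᵢᵃ zᵢᵇ`. -/
def powerSum (a b : ℕ) (w z : Fin 3 → R) : R := ∑ i, w i ^ a * z i ^ b

/-- Three of the six monomials of `(z₀ + z₁)(z₀ + z₂)(z₁ + z₂)`; exchanging `z₀` and `z₁` gives the
other three. -/
def halfDiscr (z : Fin 3 → R) : R := z 0 ^ 2 * z 1 + z 0 ^ 2 * z 2 + z 1 * z 2 ^ 2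

/-- The simultaneous symmetrization of `w₀² w₁ * halfDiscr (z ∘ τ)`. -/
def bicubic (τ : Perm (Fin 3)) (w z : Fin 3 → R) : R :=
  ∑ σ : Perm (Fin 3), w (σ 0) ^ 2 * w (σ 1) * halfDiscr (z ∘ σ ∘ τ)

/-- Module generators for the invariants of the diagonal `S₃` over those of `S₃ × S₃` acting on two
triples of variables. -/
def secondary (w z : Fin 3 → R) : Fin 6 → R :=
  ![1, bicubic (swap 0 1) w z, powerSum 1 1 w z, powerSum 2 2 w z, powerSum 1 2 w z,
    powerSum 2 1 w z]

/-- The dual of `secondary` for the relative trace form, divided by the discriminants. -/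
def dualSecondary (w z : Fin 3 → R) : Fin 6 → R :=
  ![bicubic 1 w z, 1, powerSum 2 2 w z, powerSum 1 1 w z, powerSum 2 1 w z, powerSum 1 2 w z]

lemma powerSum_comp_perm (a b : ℕ) (w z : Fin 3 → R) (σ : Perm (Fin 3)) :
    powerSum a b (w ∘ σ) (z ∘ σ) = powerSum a b w z :=
  Equiv.sum_comp σ fun i => w i ^ a * z i ^ b

lemma bicubic_comp_perm (τ : Perm (Fin 3)) (w z : Fin 3 → R) (σ : Perm (Fin 3)) :
    bicubic τ (w ∘ σ) (z ∘ σ) = bicubic τ w z :=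
  Equiv.sum_comp (Equiv.mulLeft σ) fun ρ : Perm (Fin 3) =>
    w (ρ 0) ^ 2 * w (ρ 1) * halfDiscr (z ∘ ρ ∘ τ)

lemma secondary_comp_perm (w z : Fin 3 → R) (σ : Perm (Fin 3)) :
    secondary (w ∘ σ) (z ∘ σ) = secondary w z := by
  simp only [secondary, powerSum_comp_perm, bicubic_comp_perm]

lemma dualSecondary_comp_perm (w z : Fin 3 → R) (σ : Perm (Fin 3)) :
    dualSecondary (w ∘ σ) (z ∘ σ) = dualSecondary w z := by
  simp only [dualSecondary, powerSum_comp_perm, bicubic_comp_perm]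

lemma map_secondary {R' : Type*} [CommRing R'] (φ : R →+* R') (w z : Fin 3 → R) (j : Fin 6) :
    φ (secondary w z j) = secondary (φ ∘ w) (φ ∘ z) j := by
  fin_cases j <;> simp [secondary, bicubic, powerSum, halfDiscr]

lemma map_dualSecondary {R' : Type*} [CommRing R'] (φ : R →+* R') (w z : Fin 3 → R) (j : Fin 6) :
    φ (dualSecondary w z j) = dualSecondary (φ ∘ w) (φ ∘ z) j := by
  fin_cases j <;> simp [dualSecondary, bicubic, powerSum, halfDiscr]

lemma sum_perm_fin_three (f : Perm (Fin 3) → R) :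
    ∑ σ, f σ = f 1 + f (swap 0 1) + f (swap 0 2) + f (swap 1 2) +
      f (swap 0 1 * swap 0 2) + f (swap 0 2 * swap 0 1) := by
  have univ_eq : (Finset.univ : Finset (Perm (Fin 3))) =
    {1, swap 0 1, swap 0 2, swap 1 2, swap 0 1 * swap 0 2, swap 0 2 * swap 0 1} := by decide
  rw [univ_eq]
  repeat rw [Finset.sum_insert (by decide)]
  rw [Finset.sum_singleton]
  ring

lemma perm_fin_three_cases {P : Perm (Fin 3) → Prop} (one : P 1) (swap01 : P (swap 0 1))
    (swap02 : P (swap 0 2)) (swap12 : P (swap 1 2)) (rot : P (swap 0 1 * swap 0 2))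
    (rot_inv : P (swap 0 2 * swap 0 1)) (σ : Perm (Fin 3)) : P σ := by
  have cases : ∀ σ : Perm (Fin 3), σ = 1 ∨ σ = swap 0 1 ∨ σ = swap 0 2 ∨ σ = swap 1 2 ∨
      σ = swap 0 1 * swap 0 2 ∨ σ = swap 0 2 * swap 0 1 := by decide
  rcases cases σ with rfl | rfl | rfl | rfl | rfl | rfl <;> assumption

lemma prod_prod_Ioi_fin_three (w : Fin 3 → R) :
    ∏ i, ∏ j ∈ Finset.Ioi i, (w i + w j) = (w 0 + w 1) * (w 0 + w 2) * (w 1 + w 2) := by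
  have Ioi_zero : Finset.Ioi (0 : Fin 3) = {1, 2} := by decide
  have Ioi_one : Finset.Ioi (1 : Fin 3) = {2} := by decide
  have Ioi_two : Finset.Ioi (2 : Fin 3) = ∅ := by decide
  simp [Fin.prod_univ_three, Ioi_zero, Ioi_one, Ioi_two]

theorem sum_secondary_mul_dualSecondary [CharP R 2] (w z : Fin 3 → R) (σ : Perm (Fin 3)) :
    ∑ j, secondary w z j * dualSecondary w (z ∘ σ) j =
      if σ = 1 then
        (∏ i, ∏ j ∈ Finset.Ioi i, (w i + w j)) * ∏ i, ∏ j ∈ Finset.Ioi i, (z i + z j)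
      else 0 := by
  have two_eq_zero : (2 : R) = 0 := CharTwo.two_eq_zero
  have four_eq_zero : (4 : R) = 0 := by linear_combination 2 * two_eq_zero
  have rot_ne_one : swap (0 : Fin 3) 1 * swap 0 2 ≠ 1 := by decide
  have rot_inv_ne_one : swap (0 : Fin 3) 2 * swap 0 1 ≠ 1 := by decide
  simp only [Fin.sum_univ_six, secondary, dualSecondary, bicubic, halfDiscr, powerSum,
    sum_perm_fin_three, Fin.sum_univ_three, prod_prod_Ioi_fin_three]
  induction σ using perm_fin_three_cases <;>
    simp only [Perm.coe_one, id_eq, CompTriple.comp_eq, Function.comp_apply, swap_apply_left,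
      swap_apply_right, swap_apply_def, Fin.reduceEq, ↓reduceIte, one_ne_zero, zero_ne_one,
      Perm.coe_mul, pow_one, Matrix.cons_val_zero, one_mul, Matrix.cons_val_one, mul_one,
      Matrix.cons_val, swap_eq_one_iff, rot_ne_one, rot_inv_ne_one] <;>
    rw [← sub_eq_zero] <;> ring_nf <;>
    simp [two_eq_zero, four_eq_zero]

end TwoTriples

section FanoPlane

open Equiv Pointwise

lemma mem_young_of_forall_castAdd {m n : ℕ} {σ : Perm (Fin (m + n))}
    (h : ∀ i, σ (Fin.castAdd n i) ∈ Set.range (Fin.castAdd n : Fin m → _)) : σ ∈ young m n := by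
  have mapsTo : Set.MapsTo (finSumFinEquiv.permCongrHom.symm σ)
      (Set.range (Sum.inl : Fin m → Fin m ⊕ Fin n)) (Set.range Sum.inl) := by
    rintro _ ⟨i, rfl⟩
    obtain ⟨j, hj⟩ := h i
    refine ⟨j, ?_⟩
    simp [permCongrHom, permCongr_apply, ← hj]
  obtain ⟨ab, hab⟩ := Perm.mem_sumCongrHom_range_of_perm_mapsTo_inl mapsTo
  refine ⟨ab, ?_⟩
  rw [youngHom, MonoidHom.comp_apply, hab]
  exact finSumFinEquiv.permCongrHom.apply_symm_apply σ

lemma young_eq_stabilizer (m n : ℕ) :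
    young m n = MulAction.stabilizer (Perm (Fin (m + n)))
      (Finset.univ.image (Fin.castAdd n : Fin m → Fin (m + n))) := by
  ext σ
  rw [MulAction.mem_stabilizer_iff]
  constructor
  · rintro ⟨⟨a, b⟩, rfl⟩
    have image_comp : (fun i => youngHom m n (a, b) (Fin.castAdd n i)) = Fin.castAdd n ∘ a :=
      funext (youngHom_castAdd a b)
    rw [← Finset.image_smul, Finset.image_image]
    change Finset.univ.image (fun i => youngHom m n (a, b) (Fin.castAdd n i)) = _
    rw [image_comp, ← Finset.image_image, Finset.image_univ_equiv]
  · intro h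
    refine mem_young_of_forall_castAdd fun i => ?_
    have := Finset.smul_mem_smul_finset (a := σ)
      (Finset.mem_image_of_mem (Fin.castAdd n) (Finset.mem_univ i))
    simpa [h] using this

/-- The lines of the Fano plane on `Fin 7`. -/
def lines : Finset (Finset (Fin 7)) :=
  {{0, 1, 2}, {0, 3, 4}, {0, 5, 6}, {1, 3, 5}, {1, 4, 6}, {2, 3, 6}, {2, 4, 5}}

/-- The line `{0, 1, 2}` stabilized by `young 3 4`. -/
def axis : Finset (Fin 7) := Finset.univ.image (Fin.castAdd 4 : Fin 3 → Fin 7)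

/-- The action of the generator `A` of `GL₃(𝔽₂)` on the points of the Fano plane. -/
def permA : Perm (Fin 7) := swap 1 5 * swap 2 6

/-- The action of the generator `B` of `GL₃(𝔽₂)` on the points of the Fano plane. -/
def permB : Perm (Fin 7) := youngHom 3 4 (swap 0 1 * swap 0 2, swap 0 1 * swap 1 2)

/-- The group of collineations of the Fano plane, given by generators. -/
def collineations : Subgroup (Perm (Fin 7)) := Subgroup.closure {permA, permB}

lemma permA_mem_collineations : permA ∈ collineations := Subgroup.subset_closure (by simp)

lemma permB_mem_collineations : permB ∈ collineations := Subgroup.subset_closure (by simp)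

lemma smul_lines_of_mem_collineations {g : Perm (Fin 7)} (hg : g ∈ collineations) :
    g • lines = lines := by
  suffices collineations ≤ MulAction.stabilizer (Perm (Fin 7)) lines from this hg
  rw [collineations, Subgroup.closure_le]
  rintro _ (rfl | rfl)
  · change permA • lines = lines
    decide
  · change permB • lines = lines
    decide

lemma smul_mem_lines {g : Perm (Fin 7)} (hg : g ∈ collineations) {l : Finset (Fin 7)}
    (hl : l ∈ lines) : g • l ∈ lines :=
  smul_lines_of_mem_collineations hg ▸ Finset.smul_mem_smul_finset hl

lemma not_isSwap_of_mem_collineations : ∀ τ ∈ collineations, ¬ τ.IsSwap := by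
  have swap_smul_lines : ∀ i j : Fin 7, i ≠ j → swap i j • lines ≠ lines := by decide
  rintro τ hτ ⟨i, j, hij, rfl⟩
  exact swap_smul_lines i j hij (smul_lines_of_mem_collineations hτ)

lemma orbit_axis : MulAction.orbit collineations axis = (lines : Set (Finset (Fin 7))) := by
  have axis_mem : axis ∈ lines := by decide
  -- The product of the generators is a Singer cycle: it permutes the seven lines cyclically.
  have singer : ∀ l ∈ lines, ∃ n : Fin 7, (permA * permB) ^ (n : ℕ) • axis = l := by
    decide +kernel
  ext l
  constructor
  · rintro ⟨g, rfl⟩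
    exact smul_mem_lines g.2 axis_mem
  · intro hl
    obtain ⟨n, rfl⟩ := singer l hl
    exact ⟨⟨_, pow_mem (mul_mem permA_mem_collineations permB_mem_collineations) n⟩, rfl⟩

lemma relIndex_young_collineations : (collineations ⊓ young 3 4).relIndex collineations = 7 := by
  have subgroupOf_eq : (young 3 4).subgroupOf collineations =
      MulAction.stabilizer collineations axis := by
    ext g
    rw [Subgroup.mem_subgroupOf, young_eq_stabilizer]
    rfl
  rw [Subgroup.inf_relIndex_left, Subgroup.relIndex, subgroupOf_eq, MulAction.index_stabilizer,
    orbit_axis, Set.ncard_coe_finset]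
  decide

lemma exists_youngHom_mem_collineations (b : Perm (Fin 4)) :
    ∃ a, youngHom 3 4 (a, b) ∈ collineations := by
  let proj := (collineations.comap (youngHom 3 4)).map (MonoidHom.snd _ _)
  suffices proj = ⊤ by
    obtain ⟨⟨a, _⟩, ha, rfl⟩ := this.symm ▸ Subgroup.mem_top b
    exact ⟨a, ha⟩
  have rot_mem : swap 0 1 * swap 1 2 ∈ proj := ⟨_, permB_mem_collineations, rfl⟩
  have swap_mem : swap 1 3 ∈ proj := by
    refine ⟨(swap 0 2, swap 1 3), ?_, rfl⟩
    have word : youngHom 3 4 (swap 0 2, swap 1 3) = permA * permB ^ 2 * permA * permB * permA := by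
      decide
    rw [SetLike.mem_coe, Subgroup.mem_comap, word]
    have hA := permA_mem_collineations
    have hB := permB_mem_collineations
    exact mul_mem (mul_mem (mul_mem (mul_mem hA (pow_mem hB 2)) hA) hB) hA
  have isCycle : (swap 0 1 * swap 1 2 * swap 1 3 : Perm (Fin 4)).IsCycle :=
    ⟨0, by decide, by decide⟩
  rw [eq_top_iff, ← Perm.closure_cycle_adjacent_swap isCycle (by decide) 1, Subgroup.closure_le]
  rintro _ (rfl | rfl)
  · exact mul_mem rot_mem swap_mem
  · exact swap_mem

/-- The two lines through a point of `axis` other than `axis` itself, with the point removed. -/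
def pairs (p : Fin 7) : Finset (Finset (Fin 7)) :=
  {l ∈ lines | p ∈ l ∧ l ≠ axis}.image (· \ {p})

lemma smul_pairs {g : Perm (Fin 7)} (hg : g ∈ collineations) (haxis : g • axis = axis)
    (p : Fin 7) : g • pairs p = pairs (g p) := by
  have smul_subset (g : Perm (Fin 7)) (hg : g ∈ collineations) (haxis : g • axis = axis)
      (p : Fin 7) : g • pairs p ⊆ pairs (g p) := by
    intro _ hm
    obtain ⟨_, hm', rfl⟩ := Finset.mem_smul_finset.1 hm
    obtain ⟨l, hl, rfl⟩ := Finset.mem_image.1 hm'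
    obtain ⟨hl_mem, hpl, hl_ne⟩ := Finset.mem_filter.1 hl
    refine Finset.mem_image.2 ⟨g • l, Finset.mem_filter.2 ⟨smul_mem_lines hg hl_mem,
      Finset.smul_mem_smul_finset hpl, fun h => hl_ne ?_⟩, ?_⟩
    · exact MulAction.injective g (h.trans haxis.symm)
    · rw [Finset.smul_finset_sdiff, Finset.smul_finset_singleton, Perm.smul_def]
  refine (smul_subset g hg haxis p).antisymm (Finset.subset_smul_finset_iff.2 ?_)
  simpa using smul_subset g⁻¹ (inv_mem hg) (inv_smul_eq_iff.2 haxis.symm) (g p)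

variable {S : Type*} [CommRing S]

/-- The polynomial in the last four values of `y` attached to the point `i` of `axis`. Its three
values are the roots of the resolvent cubic of the quartic with roots `y 3, y 4, y 5, y 6`. -/
def resolvent (y : Fin 7 → S) (i : Fin 3) : S := ∑ l ∈ pairs (Fin.castAdd 4 i), ∏ q ∈ l, y q

lemma resolvent_eq (y : Fin 7 → S) : resolvent y =
    ![y 3 * y 4 + y 5 * y 6, y 3 * y 5 + y 4 * y 6, y 3 * y 6 + y 4 * y 5] := by
  have pairs_zero : pairs 0 = {{3, 4}, {5, 6}} := by decide
  have pairs_one : pairs 1 = {{3, 5}, {4, 6}} := by decide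
  have pairs_two : pairs 2 = {{3, 6}, {4, 5}} := by decide
  funext i
  fin_cases i
  · change ∑ l ∈ pairs 0, ∏ q ∈ l, y q = _
    simp [pairs_zero, Finset.sum_pair (show ({3, 4} : Finset (Fin 7)) ≠ {5, 6} by decide)]
  · change ∑ l ∈ pairs 1, ∏ q ∈ l, y q = _
    simp [pairs_one, Finset.sum_pair (show ({3, 5} : Finset (Fin 7)) ≠ {4, 6} by decide)]
  · change ∑ l ∈ pairs 2, ∏ q ∈ l, y q = _
    simp [pairs_two, Finset.sum_pair (show ({3, 6} : Finset (Fin 7)) ≠ {4, 5} by decide)]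

lemma prod_prod_Ioi_resolvent (y : Fin 7 → S) :
    ∏ i, ∏ j ∈ Finset.Ioi i, (resolvent y i + resolvent y j) =
      ∏ i : Fin 4, ∏ j ∈ Finset.Ioi i, (y (Fin.natAdd 3 i) + y (Fin.natAdd 3 j)) := by
  have Ioi_zero : Finset.Ioi (0 : Fin 4) = {1, 2, 3} := by decide
  have Ioi_one : Finset.Ioi (1 : Fin 4) = {2, 3} := by decide
  have Ioi_two : Finset.Ioi (2 : Fin 4) = {3} := by decide
  have Ioi_three : Finset.Ioi (3 : Fin 4) = ∅ := by decide
  rw [prod_prod_Ioi_fin_three, resolvent_eq]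
  simp only [Fin.prod_univ_four, Ioi_zero, Ioi_one, Ioi_two, Ioi_three, Fin.reduceNatAdd,
    Fin.isValue, Finset.mem_insert, Finset.mem_singleton, Fin.reduceEq, or_self, not_false_eq_true,
    Finset.prod_insert, Finset.prod_singleton, Finset.prod_empty, mul_one, Matrix.cons_val,
    Matrix.cons_val_zero, Matrix.cons_val_one]
  ring

lemma discr_young_three_four (y : Fin 7 → S) :
    discr y (young 3 4) =
      (∏ i, ∏ j ∈ Finset.Ioi i, (resolvent y i + resolvent y j)) *
      ∏ i, ∏ j ∈ Finset.Ioi i, (y (Fin.castAdd 4 i) + y (Fin.castAdd 4 j)) := by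
  rw [prod_prod_Ioi_resolvent, mul_comm]
  exact discr_young (m := 3) (n := 4) y

variable [MulSemiringAction (Perm (Fin 7)) S] {y : Fin 7 → S}

lemma smul_resolvent (hy : ∀ (σ : Perm (Fin 7)) i, σ • y i = y (σ i)) {a : Perm (Fin 3)}
    {b : Perm (Fin 4)} (hab : youngHom 3 4 (a, b) ∈ collineations) (i : Fin 3) :
    youngHom 3 4 (a, b) • resolvent y i = resolvent y (a i) := by
  have smul_axis : youngHom 3 4 (a, b) • axis = axis :=
    (young_eq_stabilizer 3 4).le ⟨(a, b), rfl⟩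
  have prod_smul (l : Finset (Fin 7)) :
      youngHom 3 4 (a, b) • ∏ q ∈ l, y q = ∏ q ∈ youngHom 3 4 (a, b) • l, y q := by
    rw [Finset.smul_prod', ← Finset.image_smul,
      Finset.prod_image (MulAction.injective _).injOn]
    simp [hy]
  simp only [resolvent, Finset.smul_sum, prod_smul]
  rw [← youngHom_castAdd a b, ← smul_pairs hab smul_axis, ← Finset.image_smul,
    Finset.sum_image (MulAction.injective _).injOn]

lemma youngHom_one_smul_resolvent (hy : ∀ (σ : Perm (Fin 7)) i, σ • y i = y (σ i))
    (a : Perm (Fin 3)) (i : Fin 3) : youngHom 3 4 (a, 1) • resolvent y i = resolvent y i := by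
  have fixes (j : Fin 4) : youngHom 3 4 (a, 1) • y (Fin.natAdd 3 j) = y (Fin.natAdd 3 j) := by
    rw [hy, youngHom_natAdd, Perm.one_apply]
  have fixes3 : youngHom 3 4 (a, 1) • y 3 = y 3 := fixes 0
  have fixes4 : youngHom 3 4 (a, 1) • y 4 = y 4 := fixes 1
  have fixes5 : youngHom 3 4 (a, 1) • y 5 = y 5 := fixes 2
  have fixes6 : youngHom 3 4 (a, 1) • y 6 = y 6 := fixes 3
  rw [resolvent_eq]
  fin_cases i <;> simp [fixes3, fixes4, fixes5, fixes6, smul_add, smul_mul']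

lemma smul_secondary (g : Perm (Fin 7)) (w z : Fin 3 → S) (j : Fin 6) :
    g • secondary w z j = secondary (fun i => g • w i) (fun i => g • z i) j :=
  map_secondary (MulSemiringAction.toRingHom (Perm (Fin 7)) S g) w z j

lemma smul_dualSecondary (g : Perm (Fin 7)) (w z : Fin 3 → S) (j : Fin 6) :
    g • dualSecondary w z j = dualSecondary (fun i => g • w i) (fun i => g • z i) j :=
  map_dualSecondary (MulSemiringAction.toRingHom (Perm (Fin 7)) S g) w z j

variable {A : Type*} [CommRing A] [Algebra A S]

lemma smul_comp_castAdd (hy : IsPermuted A y) (a : Perm (Fin 3)) (b : Perm (Fin 4)) :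
    (fun i => youngHom 3 4 (a, b) • (y ∘ Fin.castAdd 4) i) = (y ∘ Fin.castAdd 4) ∘ a :=
  funext fun i => (hy.smul_apply _ _).trans (congrArg y (youngHom_castAdd a b i))

lemma sum_secondary_mul_smul_dualSecondary [CharP S 2] (hy : IsPermuted A y) (a : Perm (Fin 3)) :
    ∑ j, secondary (resolvent y) (y ∘ Fin.castAdd 4) j *
        youngHom 3 4 (a, 1) • dualSecondary (resolvent y) (y ∘ Fin.castAdd 4) j =
      if a = 1 then discr y (young 3 4) else 0 := by
  have smul_dual (j : Fin 6) :
      youngHom 3 4 (a, 1) • dualSecondary (resolvent y) (y ∘ Fin.castAdd 4) j =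
        dualSecondary (resolvent y) ((y ∘ Fin.castAdd 4) ∘ a) j := by
    rw [smul_dualSecondary, smul_comp_castAdd hy,
      funext (youngHom_one_smul_resolvent hy.smul_apply a)]
  rw [discr_young_three_four, Finset.sum_congr rfl fun j _ => by rw [smul_dual j]]
  exact sum_secondary_mul_dualSecondary _ _ a

variable [SMulCommClass (Perm (Fin 7)) A S]

lemma secondary_mem_invariants (hy : IsPermuted A y) (j : Fin 6) :
    secondary (resolvent y) (y ∘ Fin.castAdd 4) j ∈ invariants A (collineations ⊓ young 3 4) := by
  refine mem_invariants.2 fun g hg => ?_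
  obtain ⟨hg, ⟨a, b⟩, rfl⟩ := hg
  rw [smul_secondary, smul_comp_castAdd hy, funext (smul_resolvent hy.smul_apply hg)]
  exact congrFun (secondary_comp_perm (resolvent y) (y ∘ Fin.castAdd 4) a) j

lemma dualSecondary_mem_invariants (hy : IsPermuted A y) (j : Fin 6) :
    dualSecondary (resolvent y) (y ∘ Fin.castAdd 4) j ∈
      invariants A (collineations ⊓ young 3 4) := by
  refine mem_invariants.2 fun g hg => ?_
  obtain ⟨hg, ⟨a, b⟩, rfl⟩ := hg
  rw [smul_dualSecondary, smul_comp_castAdd hy, funext (smul_resolvent hy.smul_apply hg)]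
  exact congrFun (dualSecondary_comp_perm (resolvent y) (y ∘ Fin.castAdd 4) a) j

variable [CharP S 2] [IsDomain S] [DecompositionMonoid S] [FaithfulSMul A S]

theorem finite_and_projective_invariants_collineations_inf_young (hy : IsPermuted A y)
    (hA : invariants A (S := S) (⊤ : Subgroup (Perm (Fin 7))) = ⊥) :
    Module.Finite A (invariants A (S := S) (collineations ⊓ young 3 4)) ∧
      Module.Projective A (invariants A (S := S) (collineations ⊓ young 3 4)) := by
  obtain ⟨_, _⟩ := finite_and_projective_invariants_young (m := 3) (n := 4) hy hA
  refine finite_and_projective_invariants_of_ge inf_le_right (hy.discr_ne_zero (young 3 4))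
    (hy.discr_mem_invariants (young 3 4))
    (fun g hg => hy.discr_dvd_relTrace (fun τ hτ => not_isSwap_of_mem_collineations τ
      (Subgroup.mem_inf.1 hτ).1) hg)
    (secondary_mem_invariants hy) (dualSecondary_mem_invariants hy) (fun k hk => ?_)
    fun k hk hkH => ?_
  · rw [← (sum_secondary_mul_smul_dualSecondary hy 1).trans (if_pos rfl)]
    refine Finset.sum_congr rfl fun j _ => ?_
    rw [mem_invariants.1 (dualSecondary_mem_invariants (A := A) hy j) k hk, ← Prod.one_eq_mk,
      map_one, one_smul]
  · obtain ⟨⟨a, b⟩, rfl⟩ := hk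
    obtain ⟨a', ha'⟩ := exists_youngHom_mem_collineations b
    have ne : a * a'⁻¹ ≠ 1 := fun h => hkH ⟨mul_inv_eq_one.1 h ▸ ha', _, rfl⟩
    have factor : youngHom 3 4 (a, b) = youngHom 3 4 (a * a'⁻¹, 1) * youngHom 3 4 (a', b) := by
      rw [← map_mul, Prod.mk_mul_mk, inv_mul_cancel_right, one_mul]
    have fixes (j : Fin 6) := mem_invariants.1 (dualSecondary_mem_invariants (A := A) hy j) _
      (Subgroup.mem_inf.2 ⟨ha', _, rfl⟩)
    simp only [factor, mul_smul, fixes]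
    rw [sum_secondary_mul_smul_dualSecondary hy, if_neg ne]

theorem finite_and_projective_invariants_collineations (hy : IsPermuted A y)
    (hA : invariants A (S := S) (⊤ : Subgroup (Perm (Fin 7))) = ⊥) :
    Module.Finite A (invariants A (S := S) collineations) ∧
      Module.Projective A (invariants A (S := S) collineations) := by
  obtain ⟨_, _⟩ := finite_and_projective_invariants_collineations_inf_young hy hA
  have seven_eq_one : ((7 : ℕ) : S) = 1 := by
    linear_combination 3 * (CharTwo.two_eq_zero : (2 : S) = 0)
  refine finite_and_projective_invariants_of_le (H := collineations ⊓ young 3 4) inf_le_left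
    one_ne_zero (fun g _ => one_dvd _) (one_mem _) ?_
  rw [relTrace_one, relIndex_young_collineations, seven_eq_one]

end FanoPlane

section GradedFree

universe u

open DirectSum

variable {R M : Type*} [CommRing R] [AddCommGroup M] [Module R M]

lemma exists_finite_linearIndependent_mod [Module.Finite R M] (𝔪 : Ideal R) [𝔪.IsMaximal]
    {ι : Type u} {v : ι → M} (hv : Submodule.span R (Set.range v) = ⊤) :
    ∃ (κ : Type u) (a : κ → ι), Finite κ ∧
      Submodule.span R (Set.range (v ∘ a)) ⊔ 𝔪 • (⊤ : Submodule R M) = ⊤ ∧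
      ∀ x : κ →₀ R, Finsupp.linearCombination R (v ∘ a) x ∈ 𝔪 • (⊤ : Submodule R M) →
        ∀ i, x i ∈ 𝔪 := by
  let := Ideal.Quotient.field 𝔪
  let mk := (𝔪 • (⊤ : Submodule R M)).mkQ
  have span_mk {κ : Type u} (w : κ → M) :
      (Submodule.span (R ⧸ 𝔪) (Set.range (mk ∘ w))).restrictScalars R =
        (Submodule.span R (Set.range w)).map mk := by
    rw [Submodule.map_span, ← Set.range_comp,
      Submodule.restrictScalars_span _ _ Ideal.Quotient.mk_surjective]
  obtain ⟨κ, a, -, span_eq, indep⟩ := exists_linearIndependent' (R ⧸ 𝔪) (mk ∘ v)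
  refine ⟨κ, a, indep.finite, ?_, fun x hx i => ?_⟩
  · have := congrArg (Submodule.restrictScalars R) span_eq
    rw [Function.comp_assoc, span_mk, span_mk, hv] at this
    rw [← Submodule.ker_mkQ (𝔪 • (⊤ : Submodule R M)), ← Submodule.comap_map_eq, this,
      Submodule.comap_map_eq, top_sup_eq]
  · rw [← Submodule.ker_mkQ (𝔪 • (⊤ : Submodule R M)), LinearMap.mem_ker,
      Finsupp.linearCombination_apply, map_finsuppSum] at hx
    have sum_eq_zero :
        ∑ i ∈ x.support, Ideal.Quotient.mk 𝔪 (x i) • (mk ∘ v ∘ a) i = 0 := by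
      simpa [Finsupp.sum, mk] using hx
    by_cases hi : i ∈ x.support
    · exact Ideal.Quotient.eq_zero_iff_mem.1
        (linearIndependent_iff'.1 indep x.support _ sum_eq_zero i hi)
    · exact Finsupp.notMem_support_iff.1 hi ▸ zero_mem 𝔪

lemma linearIndependent_of_projective [IsDomain R] [Module.Projective R M] {𝔪 : Ideal R}
    (h𝔪 : 𝔪 ≠ ⊤) {ι : Type*} [Finite ι] {v : ι → M} (hv : Submodule.span R (Set.range v) = ⊤)
    (hmem : ∀ x : ι →₀ R, Finsupp.linearCombination R v x = 0 → ∀ i, x i ∈ 𝔪) :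
    LinearIndependent R v := by
  let π := Finsupp.linearCombination R v
  obtain ⟨s, hs⟩ := Module.projective_lifting_property π LinearMap.id
    (LinearMap.range_eq_top.1 ((Finsupp.range_linearCombination R).trans hv))
  let p : (ι →₀ R) →ₗ[R] (ι →₀ R) := LinearMap.id - s ∘ₗ π
  have p_apply_of_ker {x} (hx : π x = 0) : p x = x := by simp [p, hx]
  have ker_eq_range : LinearMap.ker π = LinearMap.range p := by
    ext x
    refine ⟨fun hx => ⟨x, p_apply_of_ker hx⟩, ?_⟩
    rintro ⟨x, rfl⟩
    simpa [p, sub_eq_zero] using (LinearMap.congr_fun hs (π x)).symm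
  have ker_fg : (LinearMap.ker π).FG :=
    ker_eq_range ▸ LinearMap.range_eq_map p ▸ Module.Finite.fg_top.map p
  have ker_le : LinearMap.ker π ≤ 𝔪 • LinearMap.ker π := fun x hx => by
    have : p x ∈ Submodule.map p (𝔪 • (⊤ : Submodule R (ι →₀ R))) := by
      refine ⟨x, ?_, rfl⟩
      rw [← Finsupp.sum_single x]
      refine Submodule.sum_mem _ fun i _ => ?_
      rw [← mul_one (x i), ← smul_eq_mul, ← Finsupp.smul_single]
      exact Submodule.smul_mem_smul (hmem x hx i) trivial
    rwa [Submodule.map_smul'', ← LinearMap.range_eq_map, ← ker_eq_range, p_apply_of_ker hx] at this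
  obtain ⟨r, hr, smul_eq_zero'⟩ :=
    Submodule.exists_sub_one_mem_and_smul_eq_zero_of_fg_of_le_smul 𝔪 _ ker_fg ker_le
  have r_ne_zero : r ≠ 0 := by
    rintro rfl
    exact h𝔪 ((Ideal.eq_top_iff_one _).2 (by simpa using hr))
  exact LinearMap.ker_eq_bot.1 (eq_bot_iff.2 fun x hx =>
    (smul_eq_zero.1 (smul_eq_zero' x hx)).resolve_left r_ne_zero)

variable {S σ : Type*} [CommRing S] [Algebra R S] [SetLike σ S] [AddSubmonoidClass σ S]
  {𝒜 : ℕ → σ} [GradedRing 𝒜]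

lemma decompose_smul_mem (hR : (1 : Submodule R S).IsHomogeneous 𝒜) {N : Submodule R S} {a : R}
    {s : S} {n : ℕ} (h : ∀ i ≤ n, (decompose 𝒜 (algebraMap R S a) i : S) ≠ 0 →
      (decompose 𝒜 s (n - i) : S) ∈ N) :
    (decompose 𝒜 (a • s) n : S) ∈ N := by
  classical
  rw [Algebra.smul_def, ← sum_support_decompose 𝒜 (algebraMap R S a), Finset.sum_mul,
    decompose_sum, DFinsupp.finsetSum_apply, AddSubmonoidClass.coe_finsetSum]
  refine sum_mem fun i hi => ?_
  rw [coe_decompose_mul_of_left_mem 𝒜 n (SetLike.coe_mem _)]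
  split_ifs with hin
  · obtain ⟨r, hr⟩ := Submodule.mem_one.1 (hR i (Submodule.algebraMap_mem a))
    rw [← hr, ← Algebra.smul_def]
    refine N.smul_mem r (h i hin ?_)
    simpa using hi
  · exact N.zero_mem

lemma isHomogeneous_span (hR : (1 : Submodule R S).IsHomogeneous 𝒜) {t : Set S}
    (ht : ∀ s ∈ t, SetLike.IsHomogeneousElem 𝒜 s) : (Submodule.span R t).IsHomogeneous 𝒜 := by
  intro n s hs
  induction hs using Submodule.span_induction generalizing n with
  | mem s hs =>
    obtain ⟨i, hi⟩ := ht s hs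
    rw [decompose_of_mem 𝒜 hi, coe_of_apply]
    split_ifs
    · exact Submodule.subset_span hs
    · exact zero_mem _
  | zero => simp
  | add s s' _ _ hs hs' => simpa using add_mem (hs n) (hs' n)
  | smul a s _ hs => exact decompose_smul_mem hR fun i _ _ => hs (n - i)

/-- The ideal of elements of `R` without constant term in the graded `R`-algebra `S`. -/
def irrelevantComap (R : Type*) {S σ : Type*} [CommRing R] [CommRing S] [Algebra R S]
    [SetLike σ S] [AddSubmonoidClass σ S] (𝒜 : ℕ → σ) [GradedRing 𝒜] : Ideal R :=
  (HomogeneousIdeal.irrelevant 𝒜).toIdeal.comap (algebraMap R S)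

lemma mem_irrelevantComap {a : R} :
    a ∈ irrelevantComap R 𝒜 ↔ (decompose 𝒜 (algebraMap R S a) 0 : S) = 0 :=
  Iff.rfl

theorem le_of_le_sup_irrelevantComap_smul (hR : (1 : Submodule R S).IsHomogeneous 𝒜)
    {N P : Submodule R S} (hN : N.IsHomogeneous 𝒜)
    (h : P ≤ N ⊔ irrelevantComap R 𝒜 • P) : P ≤ N := by
  suffices key : ∀ n, ∀ s ∈ P, (decompose 𝒜 s n : S) ∈ N from
    fun s hs => (hN.mem_iff).2 fun n => key n s hs
  intro n
  induction n using Nat.strong_induction_on with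
  | _ n ih =>
    intro s hs
    obtain ⟨u, hu, v, hv, rfl⟩ := Submodule.mem_sup.1 (h hs)
    rw [decompose_add, DirectSum.add_apply, AddMemClass.coe_add]
    refine add_mem (hN n hu) ?_
    clear hs
    induction hv using Submodule.smul_induction_on' with
    | smul a ha x hx =>
      refine decompose_smul_mem hR fun i hi hai => ih (n - i) ?_ x hx
      have : i ≠ 0 := by
        rintro rfl
        exact hai (mem_irrelevantComap.1 ha)
      lia
    | add x hx y hy ihx ihy =>
      rw [decompose_add, DirectSum.add_apply, AddMemClass.coe_add]
      exact add_mem ihx ihy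

theorem free_of_projective_of_isHomogeneous [IsDomain R] [(irrelevantComap R 𝒜).IsMaximal]
    (hR : (1 : Submodule R S).IsHomogeneous 𝒜) {P : Submodule R S} (hP : P.IsHomogeneous 𝒜)
    [Module.Finite R P] [Module.Projective R P] : Module.Free R P := by
  classical
  let v : {m : P // SetLike.IsHomogeneousElem 𝒜 (m : S)} → P := Subtype.val
  have span_v : Submodule.span R (Set.range v) = ⊤ := eq_top_iff.2 fun m _ => by
    have sum_eq : m = ∑ i ∈ (decompose 𝒜 (m : S)).support,
        (⟨decompose 𝒜 (m : S) i, hP i m.2⟩ : P) :=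
      Subtype.ext (by simpa using (sum_support_decompose 𝒜 (m : S)).symm)
    rw [sum_eq]
    exact sum_mem fun i _ => Submodule.subset_span ⟨⟨_, i, SetLike.coe_mem _⟩, rfl⟩
  obtain ⟨κ, a, _, span_sup, indep⟩ :=
    exists_finite_linearIndependent_mod (irrelevantComap R 𝒜) span_v
  have span_a : Submodule.span R (Set.range (v ∘ a)) = ⊤ := by
    have span_hom : ((Submodule.span R (Set.range (v ∘ a))).map P.subtype).IsHomogeneous 𝒜 := by
      rw [Submodule.map_span]
      refine isHomogeneous_span hR ?_
      rintro _ ⟨_, ⟨i, rfl⟩, rfl⟩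
      exact (a i).2
    rw [← top_le_iff, ← Submodule.map_le_map_iff_of_injective P.subtype_injective]
    refine le_of_le_sup_irrelevantComap_smul hR span_hom ?_
    rw [← Submodule.map_smul'', ← Submodule.map_sup, span_sup]
  exact .of_basis (.mk (linearIndependent_of_projective (Ideal.IsMaximal.ne_top ‹_›) span_a
    fun x hx => indep x (hx ▸ zero_mem _)) span_a.ge)

end GradedFree

section LinearForms

variable {ι k : Type*} [Field k]

lemma irreducible_of_isHomogeneous_one {p : MvPolynomial ι k} (hp : p.IsHomogeneous 1)
    (hp0 : p ≠ 0) : Irreducible p := by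
  refine irreducible_of_totalDegree_eq_one (hp.totalDegree hp0) fun x hx => ?_
  refine Ne.isUnit fun hx0 => hp0 (MvPolynomial.ext _ _ fun m => ?_)
  simpa only [hx0, zero_dvd_iff, coeff_zero] using hx m

lemma isRelPrime_of_isHomogeneous_one [Subsingleton kˣ] {p q : MvPolynomial ι k}
    (hp : p.IsHomogeneous 1) (hq : q.IsHomogeneous 1) (hp0 : p ≠ 0) (hq0 : q ≠ 0) (hpq : p ≠ q) :
    IsRelPrime p q := by
  have hp_irr := irreducible_of_isHomogeneous_one hp hp0
  rw [hp_irr.isRelPrime_iff_not_dvd,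
    hp_irr.dvd_irreducible_iff_associated (irreducible_of_isHomogeneous_one hq hq0)]
  rintro ⟨u, hu⟩
  obtain ⟨r, ⟨v, rfl⟩, hr⟩ := MvPolynomial.isUnit_iff_eq_C_of_isReduced.1 u.isUnit
  rw [hr, Subsingleton.elim v 1, Units.val_one, C_1, mul_one] at hu
  exact hpq hu

end LinearForms

local notation "Poly" => MvPolynomial (Fin 6) F2

section PointForms

/-- Seven linear forms on `W'` indexed by the points of the Fano plane, with sum zero, which `G`
permutes. They identify `W'^*` with the permutation module `𝔽₂⁷` modulo the all-ones vector. -/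
noncomputable def pointForm : Fin 7 → Poly :=
  ![X 1 + X 2 + X 4, X 0 + X 2 + X 5, X 0 + X 1 + X 3, X 2, X 1, X 0,
    X 0 + X 1 + X 2 + X 3 + X 4 + X 5]

/-- The values of the six coordinates `a, …, f` in terms of the values `v` of the seven point
forms. -/
def coords {R : Type*} [Add R] (v : Fin 7 → R) : Fin 6 → R :=
  ![v 5, v 4, v 3, v 2 + v 5 + v 4, v 0 + v 4 + v 3, v 1 + v 5 + v 3]

lemma isHomogeneous_pointForm (i : Fin 7) : (pointForm i).IsHomogeneous 1 := by
  have hX (k : Fin 6) : (X k : Poly).IsHomogeneous 1 := isHomogeneous_X F2 k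
  fin_cases i
  exacts [((hX 1).add (hX 2)).add (hX 4), ((hX 0).add (hX 2)).add (hX 5),
    ((hX 0).add (hX 1)).add (hX 3), hX 2, hX 1, hX 0,
    (((((hX 0).add (hX 1)).add (hX 2)).add (hX 3)).add (hX 4)).add (hX 5)]

lemma coords_pointForm : coords pointForm = X := by
  have two_eq_zero : (2 : Poly) = 0 := CharTwo.two_eq_zero
  funext k
  fin_cases k <;>
    simp only [coords, pointForm, Fin.zero_eta, Fin.mk_one, Fin.reduceFinMk, Matrix.cons_val,
      Matrix.cons_val_zero, Matrix.cons_val_one]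
  · linear_combination (X 0 + X 1) * two_eq_zero
  · linear_combination (X 1 + X 2) * two_eq_zero
  · linear_combination (X 0 + X 2) * two_eq_zero

lemma sum_pointForm : ∑ i, pointForm i = 0 := by
  have two_eq_zero : (2 : Poly) = 0 := CharTwo.two_eq_zero
  simp only [Fin.sum_univ_seven, pointForm, Matrix.cons_val, Matrix.cons_val_zero,
    Matrix.cons_val_one]
  linear_combination (2 * X 0 + 2 * X 1 + 2 * X 2 + X 3 + X 4 + X 5) * two_eq_zero

lemma map_coords {R S F : Type*} [Add R] [Add S] [FunLike F R S] [AddHomClass F R S] (φ : F)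
    (v : Fin 7 → R) (k : Fin 6) : φ (coords v k) = coords (fun i => φ (v i)) k := by
  fin_cases k <;> simp [coords]

lemma coords_mem {R M : Type*} [Add R] [SetLike M R] [AddMemClass M R] {N : M} {v : Fin 7 → R}
    (hv : ∀ i, v i ∈ N) (k : Fin 6) : coords v k ∈ N := by
  fin_cases k
  exacts [hv 5, hv 4, hv 3, add_mem (add_mem (hv 2) (hv 5)) (hv 4),
    add_mem (add_mem (hv 0) (hv 4)) (hv 3), add_mem (add_mem (hv 1) (hv 5)) (hv 3)]

lemma algHom_ext_pointForm {R : Type*} [CommRing R] [Algebra F2 R] {φ ψ : Poly →ₐ[F2] R}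
    (h : ∀ i, φ (pointForm i) = ψ (pointForm i)) : φ = ψ :=
  MvPolynomial.algHom_ext fun k => by
    rw [← congrFun coords_pointForm k, map_coords, map_coords, funext h]

/-- The homomorphism from `S[W'^*]` sending the point forms to `v`, provided that
`∑ i, v i = 0`. -/
noncomputable def evalAt {R : Type*} [CommRing R] [Algebra F2 R] (v : Fin 7 → R) :
    Poly →ₐ[F2] R :=
  aeval (coords v)

lemma evalAt_pointForm {R : Type*} [CommRing R] [CharP R 2] [Algebra F2 R] {v : Fin 7 → R}
    (hv : ∑ i, v i = 0) (i : Fin 7) : evalAt v (pointForm i) = v i := by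
  have two_eq_zero : (2 : R) = 0 := CharTwo.two_eq_zero
  rw [Fin.sum_univ_seven] at hv
  fin_cases i <;>
    simp only [evalAt, coords, pointForm, Fin.zero_eta, Fin.mk_one, Fin.reduceFinMk,
      Matrix.cons_val, Matrix.cons_val_zero, Matrix.cons_val_one, map_add, aeval_X]
  · linear_combination (v 4 + v 3) * two_eq_zero
  · linear_combination (v 5 + v 3) * two_eq_zero
  · linear_combination (v 5 + v 4) * two_eq_zero
  · linear_combination hv + (v 3 + v 4 + v 5 - v 6) * two_eq_zero

lemma sum_pointForm_ne_sum {s t : Finset (Fin 7)} (hcard : s.card + t.card < 7) (hst : ¬ s ⊆ t) :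
    ∑ i ∈ s, pointForm i ≠ ∑ i ∈ t, pointForm i := by
  obtain ⟨i, his, hit⟩ := Finset.not_subset.1 hst
  obtain ⟨m, hm⟩ : ∃ m, m ∉ s ∪ t := by
    by_contra! h
    have := Finset.card_union_le s t
    rw [Finset.eq_univ_of_forall h, Finset.card_univ, Fintype.card_fin] at this
    lia
  rw [Finset.notMem_union] at hm
  let v : Fin 7 → F2 := Pi.single i 1 + Pi.single m 1
  have hv : ∑ j, v j = 0 := by
    simp only [v, Pi.add_apply, Finset.sum_add_distrib, Finset.sum_pi_single', Finset.mem_univ,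
      if_true]
    rfl
  intro h
  have h_eval := congrArg (evalAt v) h
  simp only [map_sum, evalAt_pointForm hv, v, Pi.add_apply, Finset.sum_add_distrib,
    Finset.sum_pi_single', his, hit, hm.1, hm.2, if_true, if_false, add_zero] at h_eval
  exact one_ne_zero h_eval

lemma pointForm_injective : Function.Injective pointForm := by
  refine fun i j hij => by_contra fun hne => sum_pointForm_ne_sum (s := {i}) (t := {j}) ?_ ?_ ?_
  · simp
  · simpa using hne
  · simpa using hij

open Equiv

lemma root_pointForm_ne_zero {τ : Perm (Fin 7)} (hτ : τ.IsSwap) : root pointForm τ ≠ 0 := by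
  have hcard := Perm.card_support_eq_two.2 hτ
  refine sum_pointForm_ne_sum (t := ∅) (by simp [hcard]) fun h => ?_
  simp [Finset.subset_empty.1 h] at hcard

lemma pairwise_isRelPrime_root_pointForm :
    {τ : Perm (Fin 7) | τ.IsSwap}.Pairwise (Function.onFun IsRelPrime (root pointForm)) := by
  intro τ hτ τ' hτ' hne
  have hom (τ : Perm (Fin 7)) : (root pointForm τ).IsHomogeneous 1 :=
    IsHomogeneous.sum _ _ _ fun i _ => isHomogeneous_pointForm i
  have hcard := Perm.card_support_eq_two.2 hτ
  have hcard' := Perm.card_support_eq_two.2 hτ'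
  have : Subsingleton F2ˣ := ⟨by decide⟩
  refine isRelPrime_of_isHomogeneous_one (hom τ) (hom τ') (root_pointForm_ne_zero hτ)
    (root_pointForm_ne_zero hτ') (sum_pointForm_ne_sum (by simp [hcard, hcard']) fun hsub => hne ?_)
  exact eq_of_isSwap_of_support_eq hτ hτ'
    (Finset.eq_of_subset_of_card_le hsub (by rw [hcard, hcard']))

/-- The action of `Perm (Fin 7)` on `S[W'^*]` permuting the point forms. -/
noncomputable instance : MulSemiringAction (Perm (Fin 7)) Poly where
  smul σ p := evalAt (pointForm ∘ σ) p
  one_smul p := DFunLike.congr_fun (show evalAt pointForm = AlgHom.id F2 Poly from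
    algHom_ext_pointForm fun i => evalAt_pointForm sum_pointForm i) p
  mul_smul σ τ p := by
    have hsum (ρ : Perm (Fin 7)) : ∑ i, (pointForm ∘ ρ) i = 0 :=
      (Equiv.sum_comp ρ pointForm).trans sum_pointForm
    have hcomp : evalAt (pointForm ∘ ⇑(σ * τ)) =
        (evalAt (pointForm ∘ σ)).comp (evalAt (pointForm ∘ τ)) :=
      algHom_ext_pointForm fun i => by
        rw [AlgHom.comp_apply, evalAt_pointForm (hsum _), evalAt_pointForm (hsum _)]
        exact (evalAt_pointForm (hsum σ) (τ i)).symm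
    exact DFunLike.congr_fun hcomp p
  smul_zero σ := map_zero _
  smul_add σ := map_add _
  smul_one σ := map_one _
  smul_mul σ := map_mul _

instance : SMulCommClass (Perm (Fin 7)) F2 Poly where
  smul_comm σ c p := map_smul (evalAt (pointForm ∘ σ)) c p

lemma smul_pointForm (σ : Perm (Fin 7)) (i : Fin 7) : σ • pointForm i = pointForm (σ i) :=
  evalAt_pointForm ((Equiv.sum_comp σ pointForm).trans sum_pointForm) i

lemma adjoin_range_pointForm : Algebra.adjoin F2 (Set.range pointForm) = ⊤ := by
  rw [eq_top_iff, ← adjoin_range_X, Algebra.adjoin_le_iff, ← coords_pointForm]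
  rintro _ ⟨k, rfl⟩
  exact coords_mem (fun i => Algebra.subset_adjoin (Set.mem_range_self i)) k

end PointForms

section PrimaryInvariants

open Equiv

/-- The elementary symmetric polynomials of degrees `2, …, 7` in the seven point forms; the one of
degree `1` vanishes. -/
noncomputable def primaryInvariant (i : Fin 6) : Poly :=
  aeval pointForm (esymm (Fin 7) F2 (i + 2))

lemma isHomogeneous_esymm (ι R : Type*) [Fintype ι] [CommSemiring R] (n : ℕ) :
    (esymm ι R n).IsHomogeneous n := by
  refine IsHomogeneous.sum _ _ _ fun t ht => ?_
  have h := IsHomogeneous.prod t X (fun _ => 1) fun i _ => isHomogeneous_X R i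
  rwa [Finset.sum_const, (Finset.mem_powersetCard.1 ht).2, smul_eq_mul, mul_one] at h

lemma isHomogeneous_primaryInvariant (i : Fin 6) : (primaryInvariant i).IsHomogeneous (i + 2) := by
  have h := (isHomogeneous_esymm (Fin 7) F2 (i + 2)).aeval pointForm isHomogeneous_pointForm
  rwa [one_mul] at h

lemma smul_aeval_pointForm (σ : Perm (Fin 7)) (p : MvPolynomial (Fin 7) F2) :
    σ • aeval pointForm p = aeval pointForm (rename σ p) := by
  have h : (MulSemiringAction.toAlgHom F2 Poly σ).comp (aeval pointForm) =
      (aeval pointForm).comp (rename σ) :=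
    MvPolynomial.algHom_ext fun i => by simp [smul_pointForm]
  exact DFunLike.congr_fun h p

lemma smul_primaryInvariant (σ : Perm (Fin 7)) (i : Fin 6) :
    σ • primaryInvariant i = primaryInvariant i := by
  rw [primaryInvariant, smul_aeval_pointForm, rename_esymm]

lemma aeval_pointForm_esymm_one : aeval pointForm (esymm (Fin 7) F2 1) = 0 := by
  rw [esymm_one, map_sum, ← sum_pointForm]
  exact Finset.sum_congr rfl fun i _ => aeval_X _ _

/-- An equivariant section of `aeval pointForm : 𝔽₂[y₁, …, y₇] → S[W'^*]`; it exists because the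
number of points is odd, so that the `yᵢ + ∑ yⱼ` sum to zero. -/
noncomputable def pointLift : Poly →ₐ[F2] MvPolynomial (Fin 7) F2 :=
  evalAt fun i => X i + esymm (Fin 7) F2 1

lemma pointLift_pointForm (i : Fin 7) : pointLift (pointForm i) = X i + esymm (Fin 7) F2 1 := by
  refine evalAt_pointForm ?_ i
  have two_eq_zero : (2 : MvPolynomial (Fin 7) F2) = 0 := CharTwo.two_eq_zero
  rw [Finset.sum_add_distrib, ← esymm_one, Finset.sum_const, Finset.card_univ, Fintype.card_fin,
    nsmul_eq_mul, Nat.cast_ofNat]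
  linear_combination (4 * esymm (Fin 7) F2 1) * two_eq_zero

lemma aeval_pointForm_pointLift (p : Poly) : aeval pointForm (pointLift p) = p := by
  have h : (aeval pointForm).comp pointLift = AlgHom.id F2 Poly := algHom_ext_pointForm fun i => by
    rw [AlgHom.comp_apply, pointLift_pointForm, map_add, aeval_pointForm_esymm_one, aeval_X,
      add_zero, AlgHom.id_apply]
  exact DFunLike.congr_fun h p

lemma rename_pointLift (σ : Perm (Fin 7)) (p : Poly) :
    rename σ (pointLift p) = pointLift (σ • p) := by
  have h : (rename σ).comp pointLift = pointLift.comp (MulSemiringAction.toAlgHom F2 Poly σ) :=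
    algHom_ext_pointForm fun i => by
      rw [AlgHom.comp_apply, pointLift_pointForm, map_add, rename_esymm, rename_X,
        AlgHom.comp_apply, MulSemiringAction.toAlgHom_apply, smul_pointForm, pointLift_pointForm]
  exact DFunLike.congr_fun h p

/-- The polynomial subalgebra of `S[W'^*]` generated by the primary invariants. -/
noncomputable abbrev primarySubalgebra : Subalgebra F2 Poly :=
  Algebra.adjoin F2 (Set.range primaryInvariant)

lemma mem_primarySubalgebra_of_forall_smul_eq {p : Poly} (hp : ∀ σ : Perm (Fin 7), σ • p = p) :
    p ∈ primarySubalgebra := by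
  have hsymm : (pointLift p).IsSymmetric := fun σ => by rw [rename_pointLift, hp]
  obtain ⟨q, hq⟩ := esymmAlgHom_surjective F2 (σ := Fin 7) (n := 7) le_rfl ⟨pointLift p, hsymm⟩
  have hpq : p = aeval (fun i : Fin 7 => aeval pointForm (esymm (Fin 7) F2 (i + 1))) q := by
    rw [← MvPolynomial.comp_aeval_apply, ← esymmAlgHom_apply, hq, aeval_pointForm_pointLift]
  have hmem : p ∈ Algebra.adjoin F2
      (Set.range fun i : Fin 7 => aeval pointForm (esymm (Fin 7) F2 (i + 1))) := by
    rw [Algebra.adjoin_range_eq_range_aeval]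
    exact ⟨q, hpq.symm⟩
  refine Algebra.adjoin_le ?_ hmem
  rintro _ ⟨i, rfl⟩
  refine Fin.cases ?_ (fun i => ?_) i
  · change aeval pointForm (esymm (Fin 7) F2 1) ∈ primarySubalgebra
    exact aeval_pointForm_esymm_one ▸ zero_mem _
  · exact Algebra.subset_adjoin ⟨i, rfl⟩

lemma smul_coe_primarySubalgebra (σ : Perm (Fin 7)) (a : primarySubalgebra) :
    σ • (a : Poly) = a := by
  have hle : primarySubalgebra ≤
      AlgHom.equalizer (MulSemiringAction.toAlgHom F2 Poly σ) (AlgHom.id F2 Poly) := by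
    rw [Algebra.adjoin_le_iff]
    rintro _ ⟨i, rfl⟩
    exact smul_primaryInvariant σ i
  exact hle a.2

instance : SMulCommClass (Perm (Fin 7)) primarySubalgebra Poly where
  smul_comm σ a p := by
    rw [Algebra.smul_def, Algebra.smul_def, smul_mul']
    exact congrArg (· * σ • p) (smul_coe_primarySubalgebra σ a)

lemma invariants_top_eq_bot :
    invariants primarySubalgebra (S := Poly) (⊤ : Subgroup (Perm (Fin 7))) = ⊥ := by
  rw [eq_bot_iff]
  intro p hp
  have hp' : ∀ σ : Perm (Fin 7), σ • p = p := fun σ => mem_invariants.1 hp σ trivial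
  exact Algebra.mem_bot.2 ⟨⟨p, mem_primarySubalgebra_of_forall_smul_eq hp'⟩, rfl⟩

lemma isPermuted_pointForm : IsPermuted primarySubalgebra pointForm where
  smul_apply := smul_pointForm
  adjoin_range := by
    have hle : Algebra.adjoin F2 (Set.range pointForm) ≤
        (Algebra.adjoin primarySubalgebra (Set.range pointForm)).restrictScalars F2 :=
      Algebra.adjoin_le Algebra.subset_adjoin
    rw [adjoin_range_pointForm] at hle
    exact eq_top_iff.2 fun p _ => hle Algebra.mem_top
  injective := pointForm_injective
  pairwise_isRelPrime := pairwise_isRelPrime_root_pointForm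

lemma algebraicIndependent_primaryInvariant : AlgebraicIndependent F2 primaryInvariant := by
  have : Algebra.IsInvariant primarySubalgebra Poly (Perm (Fin 7)) :=
    ⟨fun p hp => ⟨⟨p, mem_primarySubalgebra_of_forall_smul_eq hp⟩, rfl⟩⟩
  have : Algebra.IsIntegral primarySubalgebra Poly :=
    Algebra.IsInvariant.isIntegral primarySubalgebra Poly (Perm (Fin 7))
  have : Algebra.IsAlgebraic primarySubalgebra Poly := inferInstance
  refine (Algebra.IsAlgebraic.isTranscendenceBasis_of_le_trdeg_of_finite F2 primaryInvariant ?_).1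
  simp [MvPolynomial.trdeg_of_isDomain]

end PrimaryInvariants

section Grading

open Equiv

lemma isHomogeneous_invariants {A Γ S σ : Type*} [Group Γ] [CommRing A] [CommRing S] [Algebra A S]
    [MulSemiringAction Γ S] [SMulCommClass Γ A S] [SetLike σ S] [AddSubmonoidClass σ S]
    {𝒜 : ℕ → σ} [GradedRing 𝒜] (h𝒜 : ∀ (γ : Γ) (n : ℕ), ∀ s ∈ 𝒜 n, γ • s ∈ 𝒜 n)
    (H : Subgroup Γ) : (Subalgebra.toSubmodule (invariants A (S := S) H)).IsHomogeneous 𝒜 := by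
  intro n s hs
  refine (mem_invariants (A := A)).2 fun γ hγ => ?_
  let φ : 𝒜 →+*ᵍ 𝒜 := ⟨MulSemiringAction.toRingHom Γ S γ, h𝒜 γ _ _⟩
  have hs' : φ s = s := (mem_invariants (A := A)).1 hs γ hγ
  exact (GradedRingHom.map_directSumDecompose 𝒜 𝒜 φ).trans (by rw [hs'])

lemma finite_and_free_of_map_val {k S : Type*} [CommRing k] [CommRing S] [Algebra k S]
    {A B : Subalgebra k S} {A' : Subalgebra k B} (hA : A'.map B.val = A)
    {P : Submodule A S} (hP : ∀ s, s ∈ P ↔ s ∈ B) [Module.Finite A P] [Module.Free A P] :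
    Module.Finite A' B ∧ Module.Free A' B := by
  subst hA
  let e : A' ≃+* A'.map B.val :=
    (A'.equivMapOfInjective B.val Subtype.val_injective).toRingEquiv
  have : RingHomInvPair (e.symm : A'.map B.val →+* A') (e : A' →+* A'.map B.val) :=
    RingHomInvPair.of_ringEquiv e.symm
  have := RingHomInvPair.symm (e.symm : A'.map B.val →+* A') (e : A' →+* A'.map B.val)
  let E : P ≃ₛₗ[(e.symm : A'.map B.val →+* A')] B :=
    { Equiv.subtypeEquivRight hP with
      map_add' := fun _ _ => rfl
      map_smul' := fun a p => Subtype.ext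
        (congrArg (fun c : A'.map B.val => (c : S) * p) (e.apply_symm_apply a)).symm }
  exact ⟨.of_surjective E.toLinearMap E.surjective, .of_equiv E⟩

attribute [local instance] MvPolynomial.gradedAlgebra

lemma smul_mem_homogeneousSubmodule (σ : Perm (Fin 7)) (n : ℕ) {p : Poly}
    (hp : p ∈ homogeneousSubmodule (Fin 6) F2 n) : σ • p ∈ homogeneousSubmodule (Fin 6) F2 n := by
  have h := IsHomogeneous.aeval hp (coords (pointForm ∘ σ))
    (coords_mem (N := homogeneousSubmodule (Fin 6) F2 1) fun i => isHomogeneous_pointForm (σ i))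
  rwa [one_mul] at h

lemma isMaximal_irrelevantComap :
    (irrelevantComap primarySubalgebra (homogeneousSubmodule (Fin 6) F2)).IsMaximal := by
  let ε : primarySubalgebra →ₐ[F2] F2 := (aeval 0).comp primarySubalgebra.val
  have hε : Function.Surjective ε := fun c => ⟨algebraMap F2 _ c, ε.commutes c⟩
  have h_eq : irrelevantComap primarySubalgebra (homogeneousSubmodule (Fin 6) F2) =
      RingHom.ker ε := by
    ext a
    have hdec : (DirectSum.decompose (homogeneousSubmodule (Fin 6) F2) (a : Poly) 0 : Poly) =
        C (coeff 0 (a : Poly)) :=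
      (decomposition.decompose'_apply (a : Poly) 0).trans (homogeneousComponent_zero _)
    have hεa : ε a = coeff 0 (a : Poly) := aeval_zero (a : Poly)
    rw [RingHom.mem_ker, hεa, ← C_eq_zero (σ := Fin 6), ← hdec]
    exact mem_irrelevantComap
  exact h_eq ▸ RingHom.ker_isMaximal_of_surjective ε hε

lemma finite_and_free_invariants_collineations :
    Module.Finite primarySubalgebra (invariants primarySubalgebra (S := Poly) collineations) ∧
      Module.Free primarySubalgebra (invariants primarySubalgebra (S := Poly) collineations) := by
  obtain ⟨_, _⟩ :=
    finite_and_projective_invariants_collineations isPermuted_pointForm invariants_top_eq_bot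
  have hom := isHomogeneous_invariants (A := primarySubalgebra)
    (𝒜 := homogeneousSubmodule (Fin 6) F2) fun σ n _ => smul_mem_homogeneousSubmodule σ n
  have hom_one : (1 : Submodule primarySubalgebra Poly).IsHomogeneous
      (homogeneousSubmodule (Fin 6) F2) := by
    rw [← Algebra.toSubmodule_bot, ← invariants_top_eq_bot]
    exact hom ⊤
  have := isMaximal_irrelevantComap
  exact ⟨‹_›, free_of_projective_of_isHomogeneous hom_one (hom collineations)⟩

end Grading

section GL3

-- `A` is the transvection `t₀₂`, conjugation by `B` shifts the indices, and `t₀₁ = ⁅t₀₂, t₂₁⁆`.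
lemma exists_mem_closure_coe_eq_transvection {i j : Fin 3} (hij : i ≠ j) :
    ∃ g ∈ Subgroup.closure {Agen, Bgen},
      (g : Matrix (Fin 3) (Fin 3) F2) = Matrix.transvection i j 1 := by
  have hA : Agen ∈ Subgroup.closure {Agen, Bgen} := Subgroup.subset_closure (.inl rfl)
  have hB : Bgen ∈ Subgroup.closure {Agen, Bgen} := Subgroup.subset_closure (.inr rfl)
  have shift {g : G3} (hg : g ∈ Subgroup.closure {Agen, Bgen}) :
      Bgen * g * Bgen⁻¹ ∈ Subgroup.closure {Agen, Bgen} := mul_mem (mul_mem hB hg) (inv_mem hB)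
  have hcomm := mul_mem (mul_mem (mul_mem hA (shift (shift hA))) (inv_mem hA))
    (inv_mem (shift (shift hA)))
  fin_cases i <;> fin_cases j
  · exact absurd rfl hij
  · exact ⟨_, hcomm, by decide⟩
  · exact ⟨_, hA, by decide⟩
  · exact ⟨_, shift hA, by decide⟩
  · exact absurd rfl hij
  · exact ⟨_, shift hcomm, by decide⟩
  · exact ⟨_, shift (shift hcomm), by decide⟩
  · exact ⟨_, shift (shift hA), by decide⟩
  · exact absurd rfl hij

lemma closure_Agen_Bgen : Subgroup.closure {Agen, Bgen} = ⊤ := by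
  rw [eq_top_iff]
  intro g _
  suffices h : ∃ g' ∈ Subgroup.closure {Agen, Bgen},
      (g' : Matrix (Fin 3) (Fin 3) F2) = (g : Matrix (Fin 3) (Fin 3) F2) by
    obtain ⟨g', hg', h⟩ := h
    exact Units.ext h ▸ hg'
  refine Matrix.diagonal_transvection_induction_of_det_ne_zero
    (fun M => ∃ g' ∈ Subgroup.closure {Agen, Bgen}, (g' : Matrix (Fin 3) (Fin 3) F2) = M) g
    ((Matrix.isUnit_iff_isUnit_det _).1 g.isUnit).ne_zero ?_ ?_ ?_
  · intro d hd
    have hd1 : d = 1 := by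
      rw [Matrix.det_diagonal, Finset.prod_ne_zero_iff] at hd
      have eq_one : ∀ a : F2, a ≠ 0 → a = 1 := by decide
      exact funext fun i => eq_one _ (hd i (Finset.mem_univ i))
    exact ⟨1, one_mem _, by rw [hd1, Units.val_one, Matrix.diagonal_one']⟩
  · rintro ⟨i, j, hij, c⟩
    have eq_zero_or_one : ∀ a : F2, a = 0 ∨ a = 1 := by decide
    rcases eq_zero_or_one c with rfl | rfl
    · exact ⟨1, one_mem _, (Matrix.transvection_zero i j).symm⟩
    · exact exists_mem_closure_coe_eq_transvection hij
  · rintro _ _ _ _ ⟨g₁, hg₁, rfl⟩ ⟨g₂, hg₂, rfl⟩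
    exact ⟨g₁ * g₂, mul_mem hg₁ hg₂, rfl⟩

end GL3

section InvariantRing

open Equiv

variable (D : G3 →* GL (Fin 6) F2)

lemma polyAct_one (p : Poly) : polyAct D 1 p = p := by
  have h : polyAct D 1 = AlgHom.id F2 Poly := MvPolynomial.algHom_ext fun i => by
    simp [polyAct, Matrix.one_apply]
  rw [h, AlgHom.id_apply]

lemma polyAct_mul (σ τ : G3) (p : Poly) :
    polyAct D (σ * τ) p = polyAct D τ (polyAct D σ p) := by
  have h : polyAct D (σ * τ) = (polyAct D τ).comp (polyAct D σ) := by
    refine MvPolynomial.algHom_ext fun i => ?_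
    simp only [polyAct, AlgHom.comp_apply, aeval_X, map_sum, map_smul, map_mul, Units.val_mul,
      Matrix.mul_apply, Finset.sum_smul, Finset.smul_sum, smul_smul]
    exact Finset.sum_comm
  rw [h, AlgHom.comp_apply]

lemma mem_invG_iff {p : Poly} :
    p ∈ invG D ↔ polyAct D Agen p = p ∧ polyAct D Bgen p = p := by
  refine ⟨fun h => ⟨h Agen trivial, h Bgen trivial⟩, fun ⟨hA, hB⟩ σ _ => ?_⟩
  have hσ : σ ∈ Subgroup.closure {Agen, Bgen} := closure_Agen_Bgen ▸ Subgroup.mem_top σ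
  induction hσ using Subgroup.closure_induction with
  | mem σ h =>
    rcases h with rfl | rfl
    exacts [hA, hB]
  | one => exact polyAct_one D p
  | mul σ τ _ _ hσ hτ => rw [polyAct_mul, hσ trivial, hτ trivial]
  | inv σ _ hσ =>
    have hp := hσ trivial
    conv_lhs => rw [← hp]
    rw [← polyAct_mul, mul_inv_cancel, polyAct_one]

lemma mem_invariants_collineations_iff {p : Poly} :
    p ∈ invariants F2 collineations ↔ permA • p = p ∧ permB • p = p := by
  rw [mem_invariants]
  refine ⟨fun h => ⟨h _ permA_mem_collineations, h _ permB_mem_collineations⟩, fun h σ hσ => ?_⟩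
  have hle : collineations ≤ MulAction.stabilizer (Perm (Fin 7)) p :=
    (Subgroup.closure_le _).2 (by rintro _ (rfl | rfl); exacts [h.1, h.2])
  exact hle hσ

variable {D}

lemma polyAct_eq_smul {g : G3} {σ : Perm (Fin 7)}
    (h : ∀ i, ∑ j, (D g : Matrix (Fin 6) (Fin 6) F2) i j • X j = coords (pointForm ∘ σ) i)
    (p : Poly) : polyAct D g p = σ • p := by
  rw [polyAct, funext h]
  rfl

lemma coords_pointForm_comp_permA :
    coords (pointForm ∘ permA) = ![X 0 + X 2 + X 5, X 1, X 2, X 3 + X 4, X 4, X 5] := by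
  have two_eq_zero : (2 : Poly) = 0 := CharTwo.two_eq_zero
  have permA_eq : ⇑permA = ![0, 5, 6, 3, 4, 1, 2] := by decide
  funext i
  fin_cases i <;>
    simp only [permA_eq, coords, pointForm, Function.comp_apply, Fin.zero_eta, Fin.mk_one,
      Fin.reduceFinMk, Matrix.cons_val, Matrix.cons_val_zero, Matrix.cons_val_one]
  · linear_combination (X 0 + X 1 + X 2 + X 5) * two_eq_zero
  · linear_combination (X 1 + X 2) * two_eq_zero
  · linear_combination (X 0 + X 2) * two_eq_zero

lemma coords_pointForm_comp_permB :
    coords (pointForm ∘ permB) = ![X 2, X 0, X 1, X 5, X 3, X 4] := by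
  have two_eq_zero : (2 : Poly) = 0 := CharTwo.two_eq_zero
  have permB_eq : ⇑permB = ![2, 0, 1, 4, 5, 3, 6] := by decide
  funext i
  fin_cases i <;>
    simp only [permB_eq, coords, pointForm, Function.comp_apply, Fin.zero_eta, Fin.mk_one,
      Fin.reduceFinMk, Matrix.cons_val, Matrix.cons_val_zero, Matrix.cons_val_one]
  · linear_combination (X 0 + X 2) * two_eq_zero
  · linear_combination (X 0 + X 1) * two_eq_zero
  · linear_combination (X 1 + X 2) * two_eq_zero

lemma polyAct_Agen (hA : (D Agen : Matrix (Fin 6) (Fin 6) F2) = DA6) (p : Poly) :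
    polyAct D Agen p = permA • p := by
  refine polyAct_eq_smul (fun i => ?_) p
  rw [hA, coords_pointForm_comp_permA]
  fin_cases i <;> simp [DA6, Fin.sum_univ_six]

lemma polyAct_Bgen (hB : (D Bgen : Matrix (Fin 6) (Fin 6) F2) = DB6) (p : Poly) :
    polyAct D Bgen p = permB • p := by
  refine polyAct_eq_smul (fun i => ?_) p
  rw [hB, coords_pointForm_comp_permB]
  fin_cases i <;> simp [DB6, Fin.sum_univ_six]

theorem invG_eq_invariants_collineations (hA : (D Agen : Matrix (Fin 6) (Fin 6) F2) = DA6)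
    (hB : (D Bgen : Matrix (Fin 6) (Fin 6) F2) = DB6) :
    invG D = invariants F2 collineations :=
  SetLike.ext fun p => by
    rw [mem_invG_iff, mem_invariants_collineations_iff, polyAct_Agen hA, polyAct_Bgen hB]

end InvariantRing

end FanoInvariants

open FanoInvariants

/-- The invariant ring `S[W'^*]^G` is Cohen-Macaulay: there exists a
homogeneous system of parameters `f₁, …, f₆` of `S[W'^*]^G` such that `S[W'^*]^G` is a
free module over the polynomial subalgebra `𝔽₂[f₁, …, f₆]`. -/
theorem stmt12 (D : G3 →* GL (Fin 6) F2)
    (hA : (D Agen : Matrix (Fin 6) (Fin 6) F2) = DA6)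
    (hB : (D Bgen : Matrix (Fin 6) (Fin 6) F2) = DB6) :
    ∃ f : Fin 6 → (invG D),
      -- `f` is a homogeneous system of parameters of `S[W'^*]^G` …
      AlgebraicIndependent F2 f ∧
      (∀ i, ∃ d : ℕ, 0 < d ∧ (f i : MvPolynomial (Fin 6) F2).IsHomogeneous d) ∧
      Module.Finite (Algebra.adjoin F2 (Set.range f)) (invG D) ∧
      -- … over whose generated polynomial subalgebra `S[W'^*]^G` is free:
      Module.Free (Algebra.adjoin F2 (Set.range f)) (invG D) := by
  have mem_invG (i : Fin 6) : primaryInvariant i ∈ invG D :=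
    invG_eq_invariants_collineations hA hB ▸
      mem_invariants.2 fun σ _ => smul_primaryInvariant σ i
  let f : Fin 6 → invG D := fun i => ⟨primaryInvariant i, mem_invG i⟩
  have map_adjoin : (Algebra.adjoin F2 (Set.range f)).map (invG D).val = primarySubalgebra := by
    rw [AlgHom.map_adjoin, ← Set.range_comp]
    rfl
  obtain ⟨finite, free⟩ := finite_and_free_invariants_collineations
  refine ⟨f, ?_, fun i => ⟨i + 2, by lia, isHomogeneous_primaryInvariant i⟩,
    finite_and_free_of_map_val map_adjoin
      (P := Subalgebra.toSubmodule (invariants primarySubalgebra collineations)) fun p => ?_⟩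
  · exact (AlgHom.algebraicIndependent_iff (invG D).val Subtype.val_injective).1
      algebraicIndependent_primaryInvariant
  · rw [invG_eq_invariants_collineations hA hB, mem_invariants]
    exact mem_invariants (A := primarySubalgebra)
end
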